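/- Let C ∈ RH∞^{n×n} be real-rational and γ > 0. Then the following are equivalent: (i) [P,C] is stable for every strictly negative imaginary (SNI) P ∈ RH∞^{n×n} satisfying P(0) ≤ γI; (ii) [P,C] is stable for every SNI P ∈ RH∞^{n×n} satisfying 0 ≤ P(0) ≤ γI; (iii) C is negative imaginary (NI), C(∞) ≥ 0 (positive semidefinite), and C(0) < (1/γ)I. -/

import Mathlib

open Matrix Polynomial Filter Topology
open scoped ComplexOrder

noncomputable section

namespace NIControl

/-- Evaluate a real-rational function at a complex point (junk value at poles). -/
def evalC (f : RatFunc ℝ) (s : ℂ) : ℂ :=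
  f.eval (algebraMap ℝ ℂ) s

/-- `s` is a pole of the real-rational function `f`
(the reduced denominator vanishes at `s`). -/
def IsPoleAt (f : RatFunc ℝ) (s : ℂ) : Prop :=
  f.denom.eval₂ (algebraMap ℝ ℂ) s = 0

variable {n : ℕ}

/-- Pointwise evaluation of a real-rational transfer matrix at a complex point. -/
def evalM (G : Matrix (Fin n) (Fin n) (RatFunc ℝ)) (s : ℂ) : Matrix (Fin n) (Fin n) ℂ :=
  Matrix.of fun i j => evalC (G i j) s

/-- Pointwise evaluation of a real-rational transfer matrix at a real point. -/
def evalR (G : Matrix (Fin n) (Fin n) (RatFunc ℝ)) (x : ℝ) : Matrix (Fin n) (Fin n) ℝ :=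
  Matrix.of fun i j => (G i j).eval (RingHom.id ℝ) x

/-- Value at `s = ∞` of a proper real-rational function. -/
def atInfinity (f : RatFunc ℝ) : ℝ :=
  if f.num.degree = f.denom.degree then f.num.leadingCoeff / f.denom.leadingCoeff else 0

/-- The instantaneous gain `G(∞)` of a proper real-rational transfer matrix. -/
def evalInf (G : Matrix (Fin n) (Fin n) (RatFunc ℝ)) : Matrix (Fin n) (Fin n) ℝ :=
  Matrix.of fun i j => atInfinity (G i j)

/-- The matrix `G` has a pole at `s`. -/
def HasPole (G : Matrix (Fin n) (Fin n) (RatFunc ℝ)) (s : ℂ) : Prop :=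
  ∃ i j, IsPoleAt (G i j) s

/-- All entries of `G` are proper rational functions. -/
def Proper (G : Matrix (Fin n) (Fin n) (RatFunc ℝ)) : Prop :=
  ∀ i j, (G i j).num.degree ≤ (G i j).denom.degree

/-- All entries of `G` are strictly proper rational functions. -/
def StrictlyProper (G : Matrix (Fin n) (Fin n) (RatFunc ℝ)) : Prop :=
  ∀ i j, (G i j).num.degree < (G i j).denom.degree

/-- The pole of `G` at the origin (if any) is at most simple. -/
def NoDoubleOriginPole (G : Matrix (Fin n) (Fin n) (RatFunc ℝ)) : Prop :=
  ∀ i j, (G i j).denom.rootMultiplicity 0 ≤ 1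

/-- Membership in `RH∞`: proper and no poles in the closed right-half complex plane. -/
def MemRHinf {m : Type*} [Fintype m] (G : Matrix m m (RatFunc ℝ)) : Prop :=
  (∀ i j, (G i j).num.degree ≤ (G i j).denom.degree) ∧
  ∀ s : ℂ, 0 ≤ s.re → ∀ i j, ¬ IsPoleAt (G i j) s

/-- The point `jω` on the imaginary axis. -/
def jw (ω : ℝ) : ℂ := Complex.I * (ω : ℂ)

/-- The negative-imaginary frequency kernel `j (M − M*)`. -/
def niKer (M : Matrix (Fin n) (Fin n) ℂ) : Matrix (Fin n) (Fin n) ℂ :=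
  Complex.I • (M - Mᴴ)

/-- Negative imaginary (NI) real-rational transfer matrix. -/
def IsNI (G : Matrix (Fin n) (Fin n) (RatFunc ℝ)) : Prop :=
  Proper G ∧
  (∀ s : ℂ, 0 < s.re → ¬ HasPole G s) ∧
  (∀ ω : ℝ, 0 < ω → ¬ HasPole G (jw ω) → (niKer (evalM G (jw ω))).PosSemidef) ∧
  (∀ ω : ℝ, 0 < ω → HasPole G (jw ω) →
    ∃ R : Matrix (Fin n) (Fin n) ℂ, R.PosSemidef ∧
      Tendsto (fun s : ℂ => (s - jw ω) • Complex.I • evalM G s) (𝓝[≠] jw ω) (𝓝 R)) ∧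
  (HasPole G 0 →
    (∀ k : ℕ, 3 ≤ k → Tendsto (fun s : ℂ => s ^ k • evalM G s) (𝓝[≠] 0) (𝓝 0)) ∧
    ∃ R : Matrix (Fin n) (Fin n) ℂ, R.PosSemidef ∧
      Tendsto (fun s : ℂ => s ^ 2 • evalM G s) (𝓝[≠] 0) (𝓝 R))

/-- Strictly negative imaginary (SNI) real-rational transfer matrix. -/
def IsSNI (G : Matrix (Fin n) (Fin n) (RatFunc ℝ)) : Prop :=
  MemRHinf G ∧ ∀ ω : ℝ, 0 < ω → (niKer (evalM G (jw ω))).PosDef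

/-- Positive real (passive) real-rational transfer matrix. -/
def IsPositiveReal (G : Matrix (Fin n) (Fin n) (RatFunc ℝ)) : Prop :=
  MemRHinf G ∧ ∀ ω : ℝ, 0 ≤ ω → (evalM G (jw ω) + (evalM G (jw ω))ᴴ).PosSemidef

/-- Output strictly passive real-rational transfer matrix. -/
def IsOSP (G : Matrix (Fin n) (Fin n) (RatFunc ℝ)) : Prop :=
  MemRHinf G ∧ ∃ ε : ℝ, 0 < ε ∧ ∀ ω : ℝ, 0 ≤ ω →
    (evalM G (jw ω) + (evalM G (jw ω))ᴴ -
      (ε : ℂ) • ((evalM G (jw ω))ᴴ * evalM G (jw ω))).PosSemidef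

/-- Stability of the positive feedback interconnection `[P, C]`:
`[I; C] (I − P C)⁻¹ [I, P] ∈ RH∞`. -/
def FeedbackStable (P C : Matrix (Fin n) (Fin n) (RatFunc ℝ)) : Prop :=
  ((1 : Matrix (Fin n) (Fin n) (RatFunc ℝ)) - P * C).det ≠ 0 ∧
  MemRHinf (Matrix.fromBlocks
    (1 - P * C)⁻¹ ((1 - P * C)⁻¹ * P)
    (C * (1 - P * C)⁻¹) (C * (1 - P * C)⁻¹ * P))

/-- All eigenvalues of the complex matrix `M` are real and less than `c`. -/
def eigsRealAndLT (M : Matrix (Fin n) (Fin n) ℂ) (c : ℝ) : Prop :=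
  ∀ μ ∈ spectrum ℂ M, μ.im = 0 ∧ μ.re < c

/-- The (real) eigenvalues of the real matrix `M` are all real and its largest
eigenvalue is less than `c`. -/
def maxEigLT (M : Matrix (Fin n) (Fin n) ℝ) (c : ℝ) : Prop :=
  eigsRealAndLT (M.map (Complex.ofReal)) c

/-- Loewner order `A ≤ B` on real matrices. -/
def LoewnerLE (A B : Matrix (Fin n) (Fin n) ℝ) : Prop := (B - A).PosSemidef

/-- Strict Loewner order `A < B` on real matrices. -/
def LoewnerLT (A B : Matrix (Fin n) (Fin n) ℝ) : Prop := (B - A).PosDef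

/-!
Since `P, C ∈ RH∞`, the loop `[P, C]` is stable iff `I - PC` is nonsingular on the closed right
half-plane and at `∞`.

*Sufficiency.* If `I - PC` is singular at `s`, there are `x ≠ 0` and `y = C(s)x` with `P(s)y = x`.
On the imaginary axis away from `0` this contradicts the signs of the imaginary parts of `x*C(s)x`
and `y*P(s)y`. For `Re s > 0` one uses the Pick-type inequality
`Re s · (x + w)*G(∞)(x + w) ≤ Re (s x*G(s)x) + 2 Re s · Re (w*G(s)x) + Re s · w*G(0)w`,
which holds for every NI `G ∈ RH∞` by the maximum principle in the half-plane. Applied to `P` at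
`(y, -y)` it gives `Re (s x*y) ≤ γ Re s · y*y`; applied to `C` at `(x, -γy)` it gives
`2γ Re s · y*y ≤ Re (s x*y) + γ² Re s · y*C(0)y`. The two contradict `C(0) < γ⁻¹I`.

*Necessity.* A vector violating one of the three conditions on `C` yields a destabilizing plant:
a second-order SNI plant with small static gain and a prescribed value at one frequency if `C` is
not NI, `(s + 1)⁻¹Q - Q` if `C(∞)` is not positive semidefinite, and `(s + 1)⁻¹m⁻¹I` if `C(0)`
has an eigenvalue `m ≥ γ⁻¹`.
-/

local notation "toRatFunc" => algebraMap ℝ[X] (RatFunc ℝ)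

section RationalFunctions

/-- The ring of scalar functions in `RH∞`, as the fractions `p / q` with `deg p ≤ deg q` and `q`
free of zeros in the closed right half-plane. The fraction need not be reduced, which makes closure
under the ring operations immediate; `mem_RHinf_iff` recovers the conditions on the reduced one. -/
def RHinf : Subring (RatFunc ℝ) where
  carrier := {f | ∃ p q : ℝ[X], p.degree ≤ q.degree ∧ (∀ s : ℂ, 0 ≤ s.re → aeval s q ≠ 0) ∧
    f = toRatFunc p / toRatFunc q}
  zero_mem' := ⟨0, 1, by simp, by simp, by simp⟩
  one_mem' := ⟨1, 1, le_rfl, by simp, by simp⟩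
  neg_mem' := by
    rintro _ ⟨p, q, hpq, hq, rfl⟩
    exact ⟨-p, q, by simpa using hpq, hq, by rw [map_neg, neg_div]⟩
  mul_mem' := by
    rintro _ _ ⟨p, q, hpq, hq, rfl⟩ ⟨p', q', hpq', hq', rfl⟩
    refine ⟨p * p', q * q', ?_, fun s hs => ?_, by rw [map_mul, map_mul, div_mul_div_comm]⟩
    · simpa only [degree_mul] using add_le_add hpq hpq'
    · simpa only [map_mul] using mul_ne_zero (hq s hs) (hq' s hs)
  add_mem' := by
    rintro _ _ ⟨p, q, hpq, hq, rfl⟩ ⟨p', q', hpq', hq', rfl⟩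
    have hq0 : q ≠ 0 := fun h => hq 0 le_rfl (by simp [h])
    have hq0' : q' ≠ 0 := fun h => hq' 0 le_rfl (by simp [h])
    refine ⟨p * q' + q * p', q * q', ?_, fun s hs => ?_, ?_⟩
    · refine (degree_add_le _ _).trans (max_le ?_ ?_)
      · simpa only [degree_mul] using add_le_add_left hpq _
      · simpa only [degree_mul] using add_le_add_right hpq' _
    · simpa only [map_mul] using mul_ne_zero (hq s hs) (hq' s hs)
    · rw [div_add_div _ _ (RatFunc.algebraMap_ne_zero hq0) (RatFunc.algebraMap_ne_zero hq0')]
      simp only [map_add, map_mul]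

variable {f g : RatFunc ℝ} {s : ℂ}

lemma mem_RHinf_iff :
    f ∈ RHinf ↔ f.num.degree ≤ f.denom.degree ∧ ∀ s : ℂ, 0 ≤ s.re → ¬ IsPoleAt f s := by
  refine ⟨?_, fun h => ⟨f.num, f.denom, h.1, h.2, f.num_div_denom.symm⟩⟩
  rintro ⟨p, q, hpq, hq, rfl⟩
  have hq0 : q ≠ 0 := fun h => hq 0 le_rfl (by simp [h])
  set f := toRatFunc p / toRatFunc q
  refine ⟨?_, fun s hs hpole => hq s hs (aeval_eq_zero_of_dvd_aeval_eq_zero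
    (RatFunc.denom_div_dvd p q) hpole)⟩
  have hcross : f.num * q = p * f.denom := (RatFunc.num_mul_eq_mul_denom_iff hq0).2 rfl
  have hdeg : f.num.degree + q.degree = p.degree + f.denom.degree := by
    rw [← degree_mul, ← degree_mul, hcross]
  have hle : f.num.degree + q.degree ≤ f.denom.degree + q.degree := by
    rw [hdeg, add_comm]
    exact add_le_add_right hpq _
  exact (WithBot.add_le_add_iff_right (degree_ne_bot.2 hq0)).1 hle

lemma memRHinf_iff_forall_mem {m : Type*} [Fintype m] {G : Matrix m m (RatFunc ℝ)} :
    MemRHinf G ↔ ∀ i j, G i j ∈ RHinf := by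
  simp only [MemRHinf, mem_RHinf_iff, forall_and]
  exact and_congr_right fun _ => ⟨fun h i j s hs => h s hs i j, fun h s hs i j => h i j s hs⟩

lemma aeval_denom_ne_zero (hf : f ∈ RHinf) (hs : 0 ≤ s.re) : aeval s f.denom ≠ 0 :=
  (mem_RHinf_iff.1 hf).2 s hs

lemma C_mem_RHinf (c : ℝ) : RatFunc.C c ∈ RHinf :=
  ⟨C c, 1, by simpa using degree_C_le, by simp, by simp⟩

lemma evalC_C (c : ℝ) (s : ℂ) : evalC (RatFunc.C c) s = c := RatFunc.eval_C _ _

lemma evalC_star (f : RatFunc ℝ) (s : ℂ) : evalC f (star s) = star (evalC f s) := by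
  have aeval_star (p : ℝ[X]) : aeval (star s) p = star (aeval s p) := aeval_conj p s
  change aeval (star s) f.num / aeval (star s) f.denom = star (aeval s f.num / aeval s f.denom)
  rw [aeval_star, aeval_star, star_div₀]

lemma evalC_div (p : ℝ[X]) {q : ℝ[X]} (hq : aeval s q ≠ 0) :
    evalC (toRatFunc p / toRatFunc q) s = aeval s p / aeval s q := by
  have hq0 : q ≠ 0 := by rintro rfl; simp at hq
  have hdenom : aeval s (toRatFunc p / toRatFunc q).denom ≠ 0 :=
    fun h => hq (aeval_eq_zero_of_dvd_aeval_eq_zero (RatFunc.denom_div_dvd p q) h)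
  have hcross := congrArg (aeval s) ((RatFunc.num_mul_eq_mul_denom_iff hq0).2
    (rfl : toRatFunc p / toRatFunc q = _))
  rw [map_mul, map_mul] at hcross
  exact (div_eq_div_iff hdenom hq).2 hcross

/-- Evaluation at a point of the closed right half-plane, where it is multiplicative because no
function in `RH∞` has a pole there. -/
def evalHom (s : ℂ) (hs : 0 ≤ s.re) : RHinf →+* ℂ where
  toFun f := evalC f s
  map_zero' := RatFunc.eval_zero _ _
  map_one' := RatFunc.eval_one _ _
  map_add' f g := RatFunc.eval_add _ _ (aeval_denom_ne_zero f.2 hs) (aeval_denom_ne_zero g.2 hs)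
  map_mul' f g := RatFunc.eval_mul _ _ (aeval_denom_ne_zero f.2 hs) (aeval_denom_ne_zero g.2 hs)

lemma evalC_sub (hf : f ∈ RHinf) (hg : g ∈ RHinf) (hs : 0 ≤ s.re) :
    evalC (f - g) s = evalC f s - evalC g s :=
  map_sub (evalHom s hs) ⟨f, hf⟩ ⟨g, hg⟩

lemma evalC_add (hf : f ∈ RHinf) (hg : g ∈ RHinf) (hs : 0 ≤ s.re) :
    evalC (f + g) s = evalC f s + evalC g s :=
  map_add (evalHom s hs) ⟨f, hf⟩ ⟨g, hg⟩

lemma evalC_mul (hf : f ∈ RHinf) (hg : g ∈ RHinf) (hs : 0 ≤ s.re) :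
    evalC (f * g) s = evalC f s * evalC g s :=
  map_mul (evalHom s hs) ⟨f, hf⟩ ⟨g, hg⟩

lemma tendsto_eval_div_eval_cobounded_of_degree_eq {𝕜 : Type*} [NormedField 𝕜] {p q : 𝕜[X]}
    (hpq : p.degree = q.degree) :
    Tendsto (fun s => p.eval s / q.eval s) (Bornology.cobounded 𝕜)
      (𝓝 (p.leadingCoeff / q.leadingCoeff)) := by
  refine (isEquivalent_cobounded_leading_monomial.div
    isEquivalent_cobounded_leading_monomial).symm.tendsto_nhds (tendsto_const_nhds.congr' ?_)
  filter_upwards [Bornology.eventually_ne_cobounded (0 : 𝕜)] with s hs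
  rw [natDegree_eq_natDegree hpq]
  exact (mul_div_mul_right _ _ (pow_ne_zero _ hs)).symm

lemma tendsto_evalC_cobounded (hf : f ∈ RHinf) :
    Tendsto (evalC f) (Bornology.cobounded ℂ) (𝓝 (atInfinity f : ℂ)) := by
  have evalC_eq (s : ℂ) : (f.num.map (algebraMap ℝ ℂ)).eval s /
      (f.denom.map (algebraMap ℝ ℂ)).eval s = evalC f s := by
    rw [eval_map, eval_map]; rfl
  refine Tendsto.congr evalC_eq ?_
  rcases (mem_RHinf_iff.1 hf).1.eq_or_lt with hdeg | hdeg
  · have h := tendsto_eval_div_eval_cobounded_of_degree_eq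
      (p := f.num.map (algebraMap ℝ ℂ)) (q := f.denom.map (algebraMap ℝ ℂ))
      (by simpa only [degree_map] using hdeg)
    simpa [atInfinity, hdeg] using h
  · have h := isLittleO_cobounded_of_degree_lt
      (P := f.num.map (algebraMap ℝ ℂ)) (Q := f.denom.map (algebraMap ℝ ℂ))
      (by simpa only [degree_map] using hdeg)
    simpa [atInfinity, hdeg.ne] using h.tendsto_div_nhds_zero

lemma tendsto_ofReal_atTop_cobounded : Tendsto ((↑) : ℝ → ℂ) atTop (Bornology.cobounded ℂ) :=
  (RCLike.tendsto_ofReal_cobounded_cobounded ℂ).mono_left IsOrderBornology.atTop_le_cobounded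

lemma tendsto_evalC_ofReal_atTop (hf : f ∈ RHinf) :
    Tendsto (fun x : ℝ => evalC f x) atTop (𝓝 (atInfinity f : ℂ)) :=
  (tendsto_evalC_cobounded hf).comp tendsto_ofReal_atTop_cobounded

lemma eq_atInfinity_of_tendsto (hf : f ∈ RHinf) {c : ℝ}
    (hc : Tendsto (fun x : ℝ => evalC f x) atTop (𝓝 (c : ℂ))) : atInfinity f = c :=
  Complex.ofReal_injective (tendsto_nhds_unique (tendsto_evalC_ofReal_atTop hf) hc)

/-- Evaluation at infinity on `RH∞`. -/
def evalInfHom : RHinf →+* ℝ where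
  toFun f := atInfinity f
  map_zero' := by simp [atInfinity]
  map_one' := by simp [atInfinity]
  map_add' f g := by
    refine eq_atInfinity_of_tendsto (add_mem f.2 g.2) ?_
    rw [Complex.ofReal_add]
    refine ((tendsto_evalC_ofReal_atTop f.2).add (tendsto_evalC_ofReal_atTop g.2)).congr' ?_
    filter_upwards [eventually_ge_atTop 0] with x hx
    exact (evalC_add f.2 g.2 (by simpa using hx)).symm
  map_mul' f g := by
    refine eq_atInfinity_of_tendsto (mul_mem f.2 g.2) ?_
    rw [Complex.ofReal_mul]
    refine ((tendsto_evalC_ofReal_atTop f.2).mul (tendsto_evalC_ofReal_atTop g.2)).congr' ?_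
    filter_upwards [eventually_ge_atTop 0] with x hx
    exact (evalC_mul f.2 g.2 (by simpa using hx)).symm

lemma atInfinity_C (c : ℝ) : atInfinity (RatFunc.C c) = c :=
  eq_atInfinity_of_tendsto (C_mem_RHinf c) (by simp only [evalC_C, tendsto_const_nhds])

lemma atInfinity_sub (hf : f ∈ RHinf) (hg : g ∈ RHinf) :
    atInfinity (f - g) = atInfinity f - atInfinity g :=
  map_sub evalInfHom ⟨f, hf⟩ ⟨g, hg⟩

lemma inv_mem_RHinf (hval : ∀ s : ℂ, 0 ≤ s.re → evalC f s ≠ 0)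
    (hinf : atInfinity f ≠ 0) : f⁻¹ ∈ RHinf := by
  have hdeg : f.num.degree = f.denom.degree := by
    by_contra h
    exact hinf (if_neg h)
  have hnum (s : ℂ) (hs : 0 ≤ s.re) : aeval s f.num ≠ 0 := fun h =>
    hval s hs (show aeval s f.num / aeval s f.denom = 0 by rw [h, zero_div])
  exact ⟨f.denom, f.num, hdeg.ge, hnum, by conv_lhs => rw [← f.num_div_denom, inv_div]⟩

lemma isUnit_RHinf_iff {f : RHinf} :
    IsUnit f ↔ (∀ s (hs : 0 ≤ s.re), evalHom s hs f ≠ 0) ∧ evalInfHom f ≠ 0 := by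
  refine ⟨fun h => ⟨fun s hs => (h.map (evalHom s hs)).ne_zero, (h.map evalInfHom).ne_zero⟩, ?_⟩
  rintro ⟨hval, hinf⟩
  have hf0 : (f : RatFunc ℝ) ≠ 0 := fun h =>
    hinf (by rw [ZeroMemClass.coe_eq_zero.1 h, map_zero])
  refine IsUnit.of_mul_eq_one ⟨_, inv_mem_RHinf hval hinf⟩ (Subtype.ext ?_)
  simpa using mul_inv_cancel₀ hf0

lemma X_mul_mem_RHinf (hf : f ∈ RHinf) (hinf : atInfinity f = 0) : RatFunc.X * f ∈ RHinf := by
  have hdeg : f.num.degree ≠ f.denom.degree := fun h => by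
    have hnum : f.num ≠ 0 := fun h0 =>
      f.denom_ne_zero (degree_eq_bot.1 (by rw [← h, h0, degree_zero]))
    rw [atInfinity, if_pos h] at hinf
    simp [hnum, f.denom_ne_zero] at hinf
  have hlt : f.num.degree < f.denom.degree := (mem_RHinf_iff.1 hf).1.lt_of_ne hdeg
  refine ⟨X * f.num, f.denom, ?_, fun s hs => aeval_denom_ne_zero hf hs, ?_⟩
  · rw [degree_mul, degree_X, add_comm]
    exact Nat.WithBot.add_one_le_of_lt hlt
  · rw [map_mul, RatFunc.algebraMap_X, mul_div_assoc, f.num_div_denom]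

lemma X_dvd_num_of_evalC_zero (hf : f ∈ RHinf) (h0 : evalC f 0 = 0) : X ∣ f.num := by
  have hnum : aeval (0 : ℂ) f.num = 0 :=
    (div_eq_zero_iff.1 h0).resolve_right (aeval_denom_ne_zero hf le_rfl)
  rw [X_dvd_iff, coeff_zero_eq_eval_zero]
  rw [← map_zero (algebraMap ℝ ℂ), aeval_algebraMap_apply] at hnum
  simpa [coe_aeval_eq_eval] using hnum

lemma X_inv_mul_mem_RHinf (hf : f ∈ RHinf) (h0 : evalC f 0 = 0) : RatFunc.X⁻¹ * f ∈ RHinf := by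
  obtain ⟨p, hp⟩ := X_dvd_num_of_evalC_zero hf h0
  refine ⟨p, f.denom, ?_, fun s hs => aeval_denom_ne_zero hf hs, ?_⟩
  · refine le_trans ?_ (mem_RHinf_iff.1 hf).1
    rw [hp, mul_comm]
    exact degree_le_mul_left p X_ne_zero
  · conv_lhs => rw [← f.num_div_denom, hp, map_mul, RatFunc.algebraMap_X, mul_div_assoc,
      inv_mul_cancel_left₀ RatFunc.X_ne_zero]

end RationalFunctions

section Feedback

variable {m : Type*} [Fintype m] [DecidableEq m]

lemma memRHinf_iff_mem_matrix {G : Matrix m m (RatFunc ℝ)} : MemRHinf G ↔ G ∈ RHinf.matrix :=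
  memRHinf_iff_forall_mem.trans Iff.rfl

lemma isUnit_det_iff_inv_mem_matrix {K : Type*} [Field K] {R : Subring K} (A : Matrix m m R) :
    IsUnit A.det ↔ (R.subtype.mapMatrix A).det ≠ 0 ∧ (R.subtype.mapMatrix A)⁻¹ ∈ R.matrix := by
  rw [← RingHom.map_det]
  constructor
  · intro hA
    have hinv : R.subtype.mapMatrix A * R.subtype.mapMatrix A⁻¹ = 1 := by
      rw [← map_mul, mul_nonsing_inv A hA, map_one]
    refine ⟨(hA.map R.subtype).ne_zero, ?_⟩
    rw [inv_eq_right_inv hinv]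
    exact fun i j => (A⁻¹ i j).2
  · rintro ⟨hdet, hinv⟩
    let B : Matrix m m R := of fun i j => ⟨_, hinv i j⟩
    have hB : R.subtype.mapMatrix B = (R.subtype.mapMatrix A)⁻¹ := rfl
    have hAB : A * B = 1 := by
      refine Matrix.map_injective R.subtype_injective ?_
      change R.subtype.mapMatrix (A * B) = R.subtype.mapMatrix 1
      rw [map_mul, hB, map_one, mul_nonsing_inv _ ?_]
      rw [← RingHom.map_det]
      exact hdet.isUnit
    exact (isUnit_iff_isUnit_det A).1 (IsUnit.of_mul_eq_one B hAB)

variable {P C : Matrix (Fin n) (Fin n) (RatFunc ℝ)}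

lemma feedbackStable_iff_inv_mem_matrix (hP : MemRHinf P) (hC : MemRHinf C) :
    FeedbackStable P C ↔ (1 - P * C).det ≠ 0 ∧ (1 - P * C)⁻¹ ∈ RHinf.matrix := by
  rw [memRHinf_iff_mem_matrix] at hP hC
  refine and_congr_right fun _ => ?_
  rw [memRHinf_iff_forall_mem]
  refine ⟨fun h i j => h (Sum.inl i) (Sum.inl j), fun h => ?_⟩
  rintro (i | i) (j | j)
  · exact h i j
  · exact mul_mem h hP i j
  · exact mul_mem hC h i j
  · exact mul_mem (mul_mem hC h) hP i j

lemma feedbackStable_iff_det_ne_zero (hP : MemRHinf P) (hC : MemRHinf C) :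
    FeedbackStable P C ↔
      (∀ s : ℂ, 0 ≤ s.re → (1 - evalM P s * evalM C s).det ≠ 0) ∧
        (1 - evalInf P * evalInf C).det ≠ 0 := by
  rw [feedbackStable_iff_inv_mem_matrix hP hC]
  rw [memRHinf_iff_forall_mem] at hP hC
  let P' : Matrix (Fin n) (Fin n) RHinf := of fun i j => ⟨_, hP i j⟩
  let C' : Matrix (Fin n) (Fin n) RHinf := of fun i j => ⟨_, hC i j⟩
  have hret : RHinf.subtype.mapMatrix (1 - P' * C') = 1 - P * C := by
    rw [map_sub, map_mul, map_one]; rfl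
  have hval (s : ℂ) (hs : 0 ≤ s.re) :
      evalHom s hs (1 - P' * C').det = (1 - evalM P s * evalM C s).det := by
    rw [RingHom.map_det, map_sub, map_mul, map_one]; rfl
  have hinf : evalInfHom (1 - P' * C').det = (1 - evalInf P * evalInf C).det := by
    rw [RingHom.map_det, map_sub, map_mul, map_one]; rfl
  rw [← hret, ← isUnit_det_iff_inv_mem_matrix, isUnit_RHinf_iff, hinf]
  exact and_congr_left fun _ => forall₂_congr fun s hs => by rw [hval s hs]

end Feedback

section HalfPlane

lemma jw_re (ω : ℝ) : (jw ω).re = 0 := by simp [jw]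

lemma continuous_jw : Continuous jw := by
  unfold jw
  fun_prop

lemma tendsto_jw_cobounded : Tendsto jw atTop (Bornology.cobounded ℂ) :=
  (tendsto_mul_left_cobounded Complex.I_ne_zero).comp tendsto_ofReal_atTop_cobounded

/-- The algebra of functions that are analytic and bounded on the closed right half-plane. Being
differentiable at the points of the imaginary axis means being analytic slightly beyond it. -/
def boundedAnalytic : Subalgebra ℂ (ℂ → ℂ) where
  carrier := {φ | (∀ s : ℂ, 0 ≤ s.re → DifferentiableAt ℂ φ s) ∧
    ∃ B : ℝ, ∀ s : ℂ, 0 ≤ s.re → ‖φ s‖ ≤ B}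
  algebraMap_mem' c := ⟨fun _ _ => differentiableAt_const c, ‖c‖, fun _ _ => le_rfl⟩
  add_mem' := by
    rintro φ ψ ⟨hφ, B, hB⟩ ⟨hψ, D, hD⟩
    exact ⟨fun s hs => (hφ s hs).add (hψ s hs), B + D,
      fun s hs => norm_add_le_of_le (hB s hs) (hD s hs)⟩
  mul_mem' := by
    rintro φ ψ ⟨hφ, B, hB⟩ ⟨hψ, D, hD⟩
    exact ⟨fun s hs => (hφ s hs).mul (hψ s hs), B * D,
      fun s hs => norm_mul_le_of_le (hB s hs) (hD s hs)⟩

variable {φ : ℂ → ℂ} {f : RatFunc ℝ}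

lemma differentiableAt_evalC (hf : f ∈ RHinf) {s : ℂ} (hs : 0 ≤ s.re) :
    DifferentiableAt ℂ (evalC f) s :=
  (f.num.differentiableAt_aeval).div (f.denom.differentiableAt_aeval) (aeval_denom_ne_zero hf hs)

lemma evalC_mem_boundedAnalytic (hf : f ∈ RHinf) : evalC f ∈ boundedAnalytic := by
  refine ⟨fun s hs => differentiableAt_evalC hf hs, ?_⟩
  have hlarge : ∀ᶠ s : ℂ in Bornology.cobounded ℂ, ‖evalC f s‖ < ‖(atInfinity f : ℂ)‖ + 1 :=
    (tendsto_evalC_cobounded hf).norm.eventually (gt_mem_nhds (lt_add_one _))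
  obtain ⟨R, -, hR⟩ := (hasBasis_cobounded_norm (E := ℂ)).eventually_iff.1 hlarge
  have hcompact : IsCompact ({s : ℂ | 0 ≤ s.re} ∩ Metric.closedBall 0 R) :=
    (isCompact_closedBall 0 R).inter_left (isClosed_le continuous_const Complex.continuous_re)
  obtain ⟨B, hB⟩ := hcompact.exists_bound_of_continuousOn
    fun s hs => (differentiableAt_evalC hf hs.1).continuousAt.continuousWithinAt
  refine ⟨max B (‖(atInfinity f : ℂ)‖ + 1), fun s hs => ?_⟩
  rcases le_total R ‖s‖ with h | h
  · exact (hR h).le.trans (le_max_right _ _)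
  · exact (hB s ⟨hs, by simpa using h⟩).trans (le_max_left _ _)

lemma norm_le_of_forall_norm_jw_le (hφ : φ ∈ boundedAnalytic) {c : ℝ}
    (haxis : ∀ ω : ℝ, ‖φ (jw ω)‖ ≤ c) {s : ℂ} (hs : 0 ≤ s.re) : ‖φ s‖ ≤ c := by
  obtain ⟨hdiff, B, hB⟩ := hφ
  refine PhragmenLindelof.right_half_plane_of_bounded_on_real ?_ ⟨1, one_lt_two, 0, ?_⟩ ?_
    (fun ω => by simpa [jw, mul_comm] using haxis ω) hs
  · refine DifferentiableOn.diffContOnCl fun z hz => (hdiff z ?_).differentiableWithinAt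
    rwa [Complex.closure_setOfPred_lt_re] at hz
  · refine Asymptotics.IsBigO.of_bound B (eventually_inf_principal.2 (.of_forall fun z hz => ?_))
    simpa using hB z (le_of_lt hz)
  · refine ⟨B, eventually_map.2 ?_⟩
    filter_upwards [eventually_ge_atTop 0] with x hx
    exact hB x (by simpa using hx)

lemma re_jw_nonneg_of_forall_ne_zero (hφ : φ ∈ boundedAnalytic)
    (haxis : ∀ ω : ℝ, ω ≠ 0 → 0 ≤ (φ (jw ω)).re) (ω : ℝ) : 0 ≤ (φ (jw ω)).re := by
  have hcont : Continuous fun ω : ℝ => (φ (jw ω)).re := continuous_iff_continuousAt.2 fun ω =>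
    Complex.continuous_re.continuousAt.comp
      ((hφ.1 _ (jw_re ω).ge).continuousAt.comp continuous_jw.continuousAt)
  exact (isClosed_Ici.preimage hcont).closure_subset_iff.2 haxis
    ((dense_compl_singleton (0 : ℝ)).closure_eq ▸ Set.mem_univ ω)

lemma re_nonneg_of_forall_re_jw_nonneg (hφ : φ ∈ boundedAnalytic)
    (haxis : ∀ ω : ℝ, ω ≠ 0 → 0 ≤ (φ (jw ω)).re) {s : ℂ} (hs : 0 ≤ s.re) : 0 ≤ (φ s).re := by
  have norm_exp_neg (z : ℂ) : ‖Complex.exp (-φ z)‖ = Real.exp (-(φ z).re) := by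
    rw [Complex.norm_exp, Complex.neg_re]
  have hexp : (fun z => Complex.exp (-φ z)) ∈ boundedAnalytic := by
    obtain ⟨hdiff, B, hB⟩ := hφ
    refine ⟨fun z hz => (hdiff z hz).neg.cexp, Real.exp B, fun z hz => ?_⟩
    rw [norm_exp_neg]
    exact Real.exp_le_exp.2 ((neg_le_abs _).trans ((Complex.abs_re_le_norm _).trans (hB z hz)))
  have hle : ‖Complex.exp (-φ s)‖ ≤ 1 := norm_le_of_forall_norm_jw_le hexp (fun ω => by
    rw [norm_exp_neg, Real.exp_le_one_iff, neg_nonpos]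
    exact re_jw_nonneg_of_forall_ne_zero hφ haxis ω) hs
  rwa [norm_exp_neg, Real.exp_le_one_iff, neg_nonpos] at hle

end HalfPlane

section QuadraticForms

variable {ι : Type*} [Fintype ι]

lemma star_dotProduct_conjTranspose_mulVec (M : Matrix ι ι ℂ) (x y : ι → ℂ) :
    star x ⬝ᵥ Mᴴ *ᵥ y = star (star y ⬝ᵥ M *ᵥ x) := by
  rw [star_dotProduct, star_mulVec, ← dotProduct_mulVec, conjTranspose_conjTranspose]

lemma star_dotProduct_map_star_mulVec (M : Matrix ι ι ℂ) (x y : ι → ℂ) :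
    star x ⬝ᵥ M.map star *ᵥ y = star (x ⬝ᵥ M *ᵥ star y) := by
  simp [dotProduct, mulVec, star_sum, Finset.mul_sum]

lemma im_star_dotProduct_map_ofReal_mulVec {A : Matrix ι ι ℝ} (hA : A.IsHermitian)
    (x : ι → ℂ) : (star x ⬝ᵥ A.map Complex.ofReal *ᵥ x).im = 0 :=
  (hA.map _ fun r => (Complex.conj_ofReal r).symm).im_star_dotProduct_mulVec_self x

lemma re_star_dotProduct_map_ofReal_mulVec_comm {A : Matrix ι ι ℝ}
    (hA : A.IsHermitian) (x y : ι → ℂ) :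
    (star x ⬝ᵥ A.map Complex.ofReal *ᵥ y).re = (star y ⬝ᵥ A.map Complex.ofReal *ᵥ x).re := by
  have hherm : (A.map Complex.ofReal).IsHermitian := hA.map _ fun r => (Complex.conj_ofReal r).symm
  have h := star_dotProduct_conjTranspose_mulVec (A.map Complex.ofReal) x y
  rw [hherm.eq] at h
  rw [h, Complex.star_def, Complex.conj_re]

open scoped MatrixOrder Matrix.Norms.L2Operator in
lemma posSemidef_map_ofReal {ι : Type*} [Finite ι] {A : Matrix ι ι ℝ} (hA : A.PosSemidef) :
    (A.map Complex.ofReal).PosSemidef := by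
  classical
  have := Fintype.ofFinite ι
  obtain ⟨B, rfl⟩ := CStarAlgebra.nonneg_iff_eq_star_mul_self.1 hA.nonneg
  have hmap : (star B * B).map Complex.ofReal = (B.map Complex.ofReal)ᴴ * B.map Complex.ofReal := by
    ext i j
    simp [mul_apply, star_apply]
  rw [hmap]
  exact posSemidef_conjTranspose_mul_self _

lemma posDef_map_ofReal {ι : Type*} [Finite ι] {A : Matrix ι ι ℝ} (hA : A.PosDef) :
    (A.map Complex.ofReal).PosDef := by
  classical
  have := Fintype.ofFinite ι
  refine ((posSemidef_map_ofReal hA.posSemidef).posDef_iff_det_ne_zero).2 ?_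
  have hdet : (A.map Complex.ofReal).det = Complex.ofReal A.det :=
    (RingHom.map_det Complex.ofRealHom A).symm
  rw [hdet, Complex.ofReal_ne_zero]
  exact hA.det_pos.ne'

variable (M : Matrix (Fin n) (Fin n) ℂ)

lemma isHermitian_niKer : (niKer M).IsHermitian := by
  simp only [niKer, IsHermitian, conjTranspose_smul, conjTranspose_sub, conjTranspose_conjTranspose,
    Complex.star_def, Complex.conj_I, neg_smul, ← smul_neg, neg_sub]

lemma star_dotProduct_niKer_mulVec (x : Fin n → ℂ) :
    star x ⬝ᵥ niKer M *ᵥ x = ((-2 * (star x ⬝ᵥ M *ᵥ x).im : ℝ) : ℂ) := by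
  rw [niKer, smul_mulVec, sub_mulVec, dotProduct_smul, dotProduct_sub,
    star_dotProduct_conjTranspose_mulVec]
  apply Complex.ext <;> simp
  ring

lemma niKer_sub_map_ofReal {A : Matrix (Fin n) (Fin n) ℝ} (hA : A.IsHermitian) :
    niKer (M - A.map Complex.ofReal) = niKer M := by
  have hherm : (A.map Complex.ofReal)ᴴ = A.map Complex.ofReal :=
    hA.map _ fun r => (Complex.conj_ofReal r).symm
  rw [niKer, niKer, conjTranspose_sub, hherm, sub_sub_sub_cancel_right]

variable {M}

lemma posSemidef_niKer_iff : (niKer M).PosSemidef ↔ ∀ x, (star x ⬝ᵥ M *ᵥ x).im ≤ 0 := by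
  simp only [posSemidef_iff_dotProduct_mulVec, isHermitian_niKer, true_and,
    star_dotProduct_niKer_mulVec, Complex.zero_le_real]
  exact forall_congr' fun x => by constructor <;> intro h <;> linarith

lemma posDef_niKer_iff : (niKer M).PosDef ↔ ∀ x ≠ 0, (star x ⬝ᵥ M *ᵥ x).im < 0 := by
  simp only [posDef_iff_dotProduct_mulVec, isHermitian_niKer, true_and,
    star_dotProduct_niKer_mulVec, Complex.zero_lt_real]
  exact forall_congr' fun x => imp_congr_right fun _ => by constructor <;> intro h <;> linarith

lemma isHermitian_of_posSemidef_niKer_map_ofReal {A : Matrix (Fin n) (Fin n) ℝ}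
    (hA : (niKer (A.map Complex.ofReal)).PosSemidef) : A.IsHermitian := by
  have htrace : (niKer (A.map Complex.ofReal)).trace = 0 := by
    simp [niKer, trace, diag]
  have hker : Complex.I • (A.map Complex.ofReal - (A.map Complex.ofReal)ᴴ) = 0 :=
    hA.trace_eq_zero_iff.1 htrace
  ext i j
  have hij := congrFun₂ (sub_eq_zero.1 ((smul_eq_zero_iff_right Complex.I_ne_zero).1 hker)) i j
  simpa [eq_comm] using hij

lemma isHermitian_of_tendsto_of_eventually_posSemidef_niKer {α : Type*} {l : Filter α} [l.NeBot]
    {F : α → Matrix (Fin n) (Fin n) ℂ} {A : Matrix (Fin n) (Fin n) ℝ}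
    (hF : Tendsto F l (𝓝 (A.map Complex.ofReal))) (hNI : ∀ᶠ a in l, (niKer (F a)).PosSemidef) :
    A.IsHermitian := by
  refine isHermitian_of_posSemidef_niKer_map_ofReal (posSemidef_niKer_iff.2 fun x => ?_)
  have hcont : Continuous fun N : Matrix (Fin n) (Fin n) ℂ => (star x ⬝ᵥ N *ᵥ x).im :=
    Complex.continuous_im.comp
      (continuous_const.dotProduct (continuous_id.matrix_mulVec continuous_const))
  exact le_of_tendsto ((hcont.tendsto _).comp hF) (hNI.mono fun a ha => posSemidef_niKer_iff.1 ha x)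

end QuadraticForms

section NegativeImaginary

variable {G : Matrix (Fin n) (Fin n) (RatFunc ℝ)}

lemma evalM_star (G : Matrix (Fin n) (Fin n) (RatFunc ℝ)) (s : ℂ) :
    evalM G (star s) = (evalM G s).map star :=
  Matrix.ext fun i j => evalC_star (G i j) s

lemma evalM_ofReal (G : Matrix (Fin n) (Fin n) (RatFunc ℝ)) (x : ℝ) :
    evalM G x = (evalR G x).map Complex.ofReal := by
  ext i j
  change eval₂ (algebraMap ℝ ℂ) (algebraMap ℝ ℂ x) _ / eval₂ (algebraMap ℝ ℂ) (algebraMap ℝ ℂ x) _ =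
    algebraMap ℝ ℂ (_ / _)
  rw [eval₂_at_apply, eval₂_at_apply, map_div₀, eval₂_id, eval₂_id]

lemma evalM_zero (G : Matrix (Fin n) (Fin n) (RatFunc ℝ)) :
    evalM G 0 = (evalR G 0).map Complex.ofReal := by
  simpa using evalM_ofReal G 0

lemma isNI_iff_of_memRHinf (hG : MemRHinf G) :
    IsNI G ↔ ∀ ω : ℝ, 0 < ω → (niKer (evalM G (jw ω))).PosSemidef := by
  have noPole (s : ℂ) (hs : 0 ≤ s.re) : ¬ HasPole G s := fun ⟨i, j, hpole⟩ => hG.2 s hs i j hpole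
  refine ⟨fun h ω hω => h.2.2.1 ω hω (noPole _ (jw_re ω).ge), fun h => ⟨hG.1, ?_, ?_, ?_, ?_⟩⟩
  · exact fun s hs => noPole s hs.le
  · exact fun ω hω _ => h ω hω
  · exact fun ω _ hpole => absurd hpole (noPole _ (jw_re ω).ge)
  · exact fun hpole => absurd hpole (noPole 0 le_rfl)

lemma IsSNI.isNI (hG : IsSNI G) : IsNI G :=
  (isNI_iff_of_memRHinf hG.1).2 fun ω hω => (hG.2 ω hω).posSemidef

lemma im_evalM_jw_neg (G : Matrix (Fin n) (Fin n) (RatFunc ℝ)) (ω : ℝ) (x : Fin n → ℂ) :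
    (star x ⬝ᵥ evalM G (jw (-ω)) *ᵥ x).im =
      -(star (star x) ⬝ᵥ evalM G (jw ω) *ᵥ star x).im := by
  have hjw : jw (-ω) = star (jw ω) := by simp [jw]
  rw [hjw, evalM_star, star_dotProduct_map_star_mulVec, star_star, Complex.star_def,
    Complex.conj_im]

lemma IsNI.mul_im_nonpos (hNI : IsNI G) (hG : MemRHinf G) (ω : ℝ) (x : Fin n → ℂ) :
    ω * (star x ⬝ᵥ evalM G (jw ω) *ᵥ x).im ≤ 0 := by
  have hpos (ω : ℝ) (hω : 0 < ω) (x : Fin n → ℂ) : (star x ⬝ᵥ evalM G (jw ω) *ᵥ x).im ≤ 0 :=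
    posSemidef_niKer_iff.1 ((isNI_iff_of_memRHinf hG).1 hNI ω hω) x
  rcases lt_trichotomy ω 0 with hω | rfl | hω
  · have h := im_evalM_jw_neg G (-ω) x
    rw [neg_neg] at h
    have := hpos (-ω) (neg_pos.2 hω) (star x)
    nlinarith
  · rw [zero_mul]
  · exact mul_nonpos_of_nonneg_of_nonpos hω.le (hpos ω hω x)

lemma IsSNI.mul_im_neg (hG : IsSNI G) {ω : ℝ} (hω : ω ≠ 0) {x : Fin n → ℂ} (hx : x ≠ 0) :
    ω * (star x ⬝ᵥ evalM G (jw ω) *ᵥ x).im < 0 := by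
  rcases hω.lt_or_gt with hω | hω
  · have h := im_evalM_jw_neg G (-ω) x
    rw [neg_neg] at h
    have := posDef_niKer_iff.1 (hG.2 (-ω) (neg_pos.2 hω)) (star x) (star_ne_zero.2 hx)
    nlinarith
  · exact mul_neg_of_pos_of_neg hω (posDef_niKer_iff.1 (hG.2 ω hω) x hx)

lemma IsNI.isHermitian_evalR_zero (hNI : IsNI G) (hG : MemRHinf G) : (evalR G 0).IsHermitian := by
  have hcont : ContinuousAt (fun ω => evalM G (jw ω)) 0 := by
    refine continuousAt_pi.2 fun i => continuousAt_pi.2 fun j => ?_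
    have hdiff := differentiableAt_evalC (memRHinf_iff_forall_mem.1 hG i j) (jw_re 0).ge
    exact hdiff.continuousAt.comp continuous_jw.continuousAt
  have hlim : Tendsto (fun ω => evalM G (jw ω)) (𝓝[>] 0) (𝓝 ((evalR G 0).map Complex.ofReal)) := by
    have h := hcont.tendsto.mono_left (nhdsWithin_le_nhds (s := Set.Ioi 0))
    rwa [show jw 0 = 0 by simp [jw], evalM_zero] at h
  exact isHermitian_of_tendsto_of_eventually_posSemidef_niKer hlim
    (eventually_mem_nhdsWithin.mono fun ω hω => (isNI_iff_of_memRHinf hG).1 hNI ω hω)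

lemma IsNI.isHermitian_evalInf (hNI : IsNI G) (hG : MemRHinf G) : (evalInf G).IsHermitian := by
  have hlim : Tendsto (fun ω => evalM G (jw ω)) atTop (𝓝 ((evalInf G).map Complex.ofReal)) :=
    tendsto_pi_nhds.2 fun i => tendsto_pi_nhds.2 fun j =>
      (tendsto_evalC_cobounded (memRHinf_iff_forall_mem.1 hG i j)).comp tendsto_jw_cobounded
  exact isHermitian_of_tendsto_of_eventually_posSemidef_niKer hlim
    ((eventually_gt_atTop 0).mono fun ω hω => (isNI_iff_of_memRHinf hG).1 hNI ω hω)

end NegativeImaginary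

section PickInequality

variable {G K : Matrix (Fin n) (Fin n) (RatFunc ℝ)} {s : ℂ}

lemma dotProduct_evalM_mulVec_mem_boundedAnalytic (hG : MemRHinf G) (x y : Fin n → ℂ) :
    (fun z => x ⬝ᵥ evalM G z *ᵥ y) ∈ boundedAnalytic := by
  have hsum : (fun z => x ⬝ᵥ evalM G z *ᵥ y) = ∑ i, x i • ∑ j, y j • evalC (G i j) := by
    ext z
    simp [dotProduct, mulVec, evalM, Finset.sum_apply, mul_comm]
  rw [hsum]
  exact sum_mem fun i _ => Subalgebra.smul_mem _ (sum_mem fun j _ => Subalgebra.smul_mem _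
    (evalC_mem_boundedAnalytic (memRHinf_iff_forall_mem.1 hG i j)) _) _

lemma evalC_X_mul {f : RatFunc ℝ} (hf : f ∈ RHinf) (hs : 0 ≤ s.re) :
    evalC (RatFunc.X * f) s = s * evalC f s := by
  refine (RatFunc.eval_mul _ _ (by simp) (aeval_denom_ne_zero hf hs)).trans ?_
  rw [RatFunc.eval_X]
  rfl

lemma exists_evalM_eq_smul (hK : MemRHinf K) (hinf : evalInf K = 0) :
    ∃ L, MemRHinf L ∧ ∀ z : ℂ, 0 ≤ z.re → evalM L z = z • evalM K z := by
  rw [memRHinf_iff_forall_mem] at hK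
  refine ⟨of fun i j => RatFunc.X * K i j, memRHinf_iff_forall_mem.2 fun i j => ?_,
    fun z hz => ?_⟩
  · rw [of_apply]
    exact X_mul_mem_RHinf (hK i j) (congrFun₂ hinf i j)
  · ext i j
    exact evalC_X_mul (hK i j) hz

lemma MemRHinf.sub_map_C (hG : MemRHinf G) (A : Matrix (Fin n) (Fin n) ℝ) :
    MemRHinf (G - A.map RatFunc.C) :=
  memRHinf_iff_forall_mem.2 fun i j => sub_mem (memRHinf_iff_forall_mem.1 hG i j) (C_mem_RHinf _)

lemma evalM_sub_map_C (hG : MemRHinf G) (A : Matrix (Fin n) (Fin n) ℝ) {z : ℂ} (hz : 0 ≤ z.re) :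
    evalM (G - A.map RatFunc.C) z = evalM G z - A.map Complex.ofReal := by
  ext i j
  refine (evalC_sub (memRHinf_iff_forall_mem.1 hG i j) (C_mem_RHinf _) hz).trans ?_
  rw [evalC_C]
  rfl

lemma evalInf_sub_map_C (hG : MemRHinf G) (A : Matrix (Fin n) (Fin n) ℝ) :
    evalInf (G - A.map RatFunc.C) = evalInf G - A := by
  ext i j
  refine (atInfinity_sub (memRHinf_iff_forall_mem.1 hG i j) (C_mem_RHinf _)).trans ?_
  rw [atInfinity_C]
  rfl

lemma evalR_zero_sub_map_C (hG : MemRHinf G) (A : Matrix (Fin n) (Fin n) ℝ) :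
    evalR (G - A.map RatFunc.C) 0 = evalR G 0 - A := by
  refine Matrix.map_injective Complex.ofReal_injective ?_
  beta_reduce
  rw [← evalM_zero, evalM_sub_map_C hG A le_rfl, evalM_zero, Matrix.map_sub _ Complex.ofReal_sub]

lemma exists_smul_evalM_eq_sub (hK : MemRHinf K) :
    ∃ L, MemRHinf L ∧ ∀ z : ℂ, 0 ≤ z.re → z • evalM L z = evalM K z - evalM K 0 := by
  let D : Matrix (Fin n) (Fin n) (RatFunc ℝ) := K - (evalR K 0).map RatFunc.C
  have evalM_D (z : ℂ) (hz : 0 ≤ z.re) : evalM D z = evalM K z - evalM K 0 := by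
    rw [evalM_sub_map_C hK _ hz, evalM_zero]
  have evalM_D_zero : evalM D 0 = 0 := by rw [evalM_D 0 le_rfl, sub_self]
  have hmem (i j) : RatFunc.X⁻¹ * D i j ∈ RHinf :=
    X_inv_mul_mem_RHinf (memRHinf_iff_forall_mem.1 (hK.sub_map_C _) i j)
      (congrFun₂ evalM_D_zero i j)
  refine ⟨of fun i j => RatFunc.X⁻¹ * D i j, memRHinf_iff_forall_mem.2 fun i j => ?_,
    fun z hz => ?_⟩
  · rw [of_apply]
    exact hmem i j
  · rw [← evalM_D z hz]
    ext i j
    refine (evalC_X_mul (hmem i j) hz).symm.trans ?_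
    rw [mul_inv_cancel_left₀ RatFunc.X_ne_zero]
    rfl

lemma mul_star_dotProduct_mulVec_add_smul (M : Matrix (Fin n) (Fin n) ℂ) {z : ℂ} (hz : z ≠ 0)
    (hstar : star z = -z) (s : ℂ) (x w : Fin n → ℂ) :
    z * (star (x + (1 - s / z) • w) ⬝ᵥ M *ᵥ (x + (1 - s / z) • w)) =
      z * (star (x + w) ⬝ᵥ M *ᵥ (x + w)) - s * (star x ⬝ᵥ M *ᵥ w) +
        star s * (star w ⬝ᵥ M *ᵥ x) + (star s - s) * (star w ⬝ᵥ M *ᵥ w) -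
        s * star s * (star w ⬝ᵥ M *ᵥ w / z) := by
  simp only [mulVec_add, mulVec_smul, star_add, star_smul, add_dotProduct, dotProduct_add,
    smul_dotProduct, dotProduct_smul, smul_eq_mul, star_sub, star_one, star_div₀, hstar]
  field_simp
  ring

/-- The auxiliary function of the maximum principle behind Pick's inequality, for transfer matrices
`K`, `K₁ = z K` and `K₂ = (K - K(0)) / z`. On the imaginary axis it is, up to an imaginary term,
`z` times the form of `K z` on the vector `x + (1 - s / z) w`, which equals `x` at `z = s`. -/
def pickAux (K K₁ K₂ : Matrix (Fin n) (Fin n) (RatFunc ℝ)) (s : ℂ) (x w : Fin n → ℂ) : ℂ → ℂ :=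
  (fun z => star (x + w) ⬝ᵥ evalM K₁ z *ᵥ (x + w)) -
    s • (fun z => star x ⬝ᵥ evalM K z *ᵥ w) + star s • (fun z => star w ⬝ᵥ evalM K z *ᵥ x) +
    (star s - s) • (fun z => star w ⬝ᵥ evalM K z *ᵥ w) -
    (s * star s) • (fun z => star w ⬝ᵥ evalM K₂ z *ᵥ w)

variable {K₁ K₂ : Matrix (Fin n) (Fin n) (RatFunc ℝ)}

lemma pickAux_mem_boundedAnalytic (hK : MemRHinf K) (hK₁ : MemRHinf K₁) (hK₂ : MemRHinf K₂)
    (s : ℂ) (x w : Fin n → ℂ) : pickAux K K₁ K₂ s x w ∈ boundedAnalytic := by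
  have hform {L : Matrix (Fin n) (Fin n) (RatFunc ℝ)} (hL : MemRHinf L) (a b : Fin n → ℂ) (c : ℂ) :
      c • (fun z => star a ⬝ᵥ evalM L z *ᵥ b) ∈ boundedAnalytic :=
    Subalgebra.smul_mem _ (dotProduct_evalM_mulVec_mem_boundedAnalytic hL (star a) b) c
  exact sub_mem (add_mem (add_mem (sub_mem
    (dotProduct_evalM_mulVec_mem_boundedAnalytic hK₁ _ _) (hform hK x w s)) (hform hK w x _))
    (hform hK w w _)) (hform hK₂ w w _)

lemma pickAux_eq {z : ℂ} (hz : z ≠ 0) (hK₁ : evalM K₁ z = z • evalM K z)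
    (hK₂ : z • evalM K₂ z = evalM K z - evalM K 0) (s : ℂ) (x w : Fin n → ℂ) :
    pickAux K K₁ K₂ s x w z =
      z * (star (x + w) ⬝ᵥ evalM K z *ᵥ (x + w)) - s * (star x ⬝ᵥ evalM K z *ᵥ w) +
        star s * (star w ⬝ᵥ evalM K z *ᵥ x) + (star s - s) * (star w ⬝ᵥ evalM K z *ᵥ w) -
        s * star s * (star w ⬝ᵥ evalM K z *ᵥ w / z) +
        s * star s * (star w ⬝ᵥ evalM K 0 *ᵥ w / z) := by
  have hww : star w ⬝ᵥ evalM K₂ z *ᵥ w =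
      star w ⬝ᵥ evalM K z *ᵥ w / z - star w ⬝ᵥ evalM K 0 *ᵥ w / z := by
    rw [← sub_div, eq_div_iff hz, mul_comm, ← dotProduct_sub, ← sub_mulVec, ← hK₂, smul_mulVec,
      dotProduct_smul, smul_eq_mul]
  simp only [pickAux, Pi.sub_apply, Pi.add_apply, Pi.smul_apply, smul_eq_mul, hK₁, hww, smul_mulVec,
    dotProduct_smul]
  ring

lemma pickAux_self (hs : s ≠ 0) (hK₁ : evalM K₁ s = s • evalM K s)
    (hK₂ : s • evalM K₂ s = evalM K s - evalM K 0) (x w : Fin n → ℂ) :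
    pickAux K K₁ K₂ s x w s =
      s * (star x ⬝ᵥ evalM K s *ᵥ x) + (s + star s) * (star w ⬝ᵥ evalM K s *ᵥ x) +
        star s * (star w ⬝ᵥ evalM K 0 *ᵥ w) := by
  rw [pickAux_eq hs hK₁ hK₂]
  simp only [mulVec_add, star_add, add_dotProduct, dotProduct_add]
  field_simp
  ring

lemma re_pickAux_jw {ω : ℝ} (hω : ω ≠ 0) (hK₁ : evalM K₁ (jw ω) = jw ω • evalM K (jw ω))
    (hK₂ : jw ω • evalM K₂ (jw ω) = evalM K (jw ω) - evalM K 0)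
    (hK₀ : (evalR K 0).IsHermitian) (s : ℂ) (x w : Fin n → ℂ) :
    (pickAux K K₁ K₂ s x w (jw ω)).re =
      -(ω * (star (x + (1 - s / jw ω) • w) ⬝ᵥ evalM K (jw ω) *ᵥ (x + (1 - s / jw ω) • w)).im) := by
  have hz : jw ω ≠ 0 := mul_ne_zero Complex.I_ne_zero (Complex.ofReal_ne_zero.2 hω)
  have hstar : star (jw ω) = -jw ω := by simp [jw]
  have hzero : (s * star s * (star w ⬝ᵥ evalM K 0 *ᵥ w / jw ω)).re = 0 := by
    have him := im_star_dotProduct_map_ofReal_mulVec hK₀ w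
    rw [← evalM_zero] at him
    rw [Complex.star_def, Complex.mul_conj, Complex.re_ofReal_mul]
    simp [jw, Complex.div_re, him]
  rw [pickAux_eq hz hK₁ hK₂, ← mul_star_dotProduct_mulVec_add_smul _ hz hstar, Complex.add_re,
    hzero]
  simp [jw]

lemma IsNI.pick_of_evalInf_eq_zero (hNI : IsNI K) (hK : MemRHinf K) (hinf : evalInf K = 0)
    (hs : 0 < s.re) (x w : Fin n → ℂ) :
    0 ≤ (s * (star x ⬝ᵥ evalM K s *ᵥ x)).re + 2 * s.re * (star w ⬝ᵥ evalM K s *ᵥ x).re +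
      s.re * (star w ⬝ᵥ (evalR K 0).map Complex.ofReal *ᵥ w).re := by
  obtain ⟨K₁, memK₁, hK₁⟩ := exists_evalM_eq_smul hK hinf
  obtain ⟨K₂, memK₂, hK₂⟩ := exists_smul_evalM_eq_sub hK
  have hK₀ := hNI.isHermitian_evalR_zero hK
  have haxis (ω : ℝ) (hω : ω ≠ 0) : 0 ≤ (pickAux K K₁ K₂ s x w (jw ω)).re := by
    rw [re_pickAux_jw hω (hK₁ _ (jw_re ω).ge) (hK₂ _ (jw_re ω).ge) hK₀]
    exact neg_nonneg.2 (hNI.mul_im_nonpos hK ω _)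
  have h := re_nonneg_of_forall_re_jw_nonneg
    (pickAux_mem_boundedAnalytic hK memK₁ memK₂ s x w) haxis hs.le
  have hs0 : s ≠ 0 := fun h => by simp [h] at hs
  rw [pickAux_self hs0 (hK₁ s hs.le) (hK₂ s hs.le), evalM_zero] at h
  have him := im_star_dotProduct_map_ofReal_mulVec hK₀ w
  simpa [him, two_mul] using h

lemma IsNI.sub_map_C (hNI : IsNI G) (hG : MemRHinf G) {A : Matrix (Fin n) (Fin n) ℝ}
    (hA : A.IsHermitian) : IsNI (G - A.map RatFunc.C) := by
  refine (isNI_iff_of_memRHinf (hG.sub_map_C A)).2 fun ω hω => ?_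
  rw [evalM_sub_map_C hG A (jw_re ω).ge, niKer_sub_map_ofReal _ hA]
  exact (isNI_iff_of_memRHinf hG).1 hNI ω hω

lemma IsNI.pick_inequality (hNI : IsNI G) (hG : MemRHinf G) (hs : 0 < s.re) (x w : Fin n → ℂ) :
    s.re * (star (x + w) ⬝ᵥ (evalInf G).map Complex.ofReal *ᵥ (x + w)).re ≤
      (s * (star x ⬝ᵥ evalM G s *ᵥ x)).re + 2 * s.re * (star w ⬝ᵥ evalM G s *ᵥ x).re +
        s.re * (star w ⬝ᵥ (evalR G 0).map Complex.ofReal *ᵥ w).re := by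
  set A := evalInf G
  have hA_herm : A.IsHermitian := hNI.isHermitian_evalInf hG
  have hKinf : evalInf (G - A.map RatFunc.C) = 0 := by rw [evalInf_sub_map_C hG, sub_self]
  have h := (hNI.sub_map_C hG hA_herm).pick_of_evalInf_eq_zero (hG.sub_map_C A) hKinf hs x w
  rw [← evalM_zero, evalM_sub_map_C hG A hs.le, evalM_sub_map_C hG A le_rfl, evalM_zero] at h
  have hxx := im_star_dotProduct_map_ofReal_mulVec hA_herm x
  have hxw := re_star_dotProduct_map_ofReal_mulVec_comm hA_herm x w
  simp only [sub_mulVec, dotProduct_sub, mul_sub, Complex.sub_re] at h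
  rw [Complex.mul_re s (star x ⬝ᵥ A.map _ *ᵥ x), hxx] at h
  simp only [mulVec_add, star_add, add_dotProduct, dotProduct_add, Complex.add_re]
  rw [hxw]
  linarith

end PickInequality

section Sufficiency

variable {A B : Matrix (Fin n) (Fin n) ℝ} {G P C : Matrix (Fin n) (Fin n) (RatFunc ℝ)} {γ : ℝ}

lemma det_one_sub_mul_eq_zero_iff {ι K : Type*} [Fintype ι] [DecidableEq ι] [Field K]
    {A B : Matrix ι ι K} : (1 - A * B).det = 0 ↔ ∃ x ≠ 0, A *ᵥ (B *ᵥ x) = x := by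
  rw [← exists_mulVec_eq_zero_iff]
  simp only [sub_mulVec, one_mulVec, mulVec_mulVec, sub_eq_zero]
  exact exists_congr fun x => and_congr_right fun _ => eq_comm

lemma det_one_sub_evalM_zero (P C : Matrix (Fin n) (Fin n) (RatFunc ℝ)) :
    (1 - evalM P 0 * evalM C 0).det = ((1 - evalR P 0 * evalR C 0).det : ℂ) := by
  rw [← Complex.ofRealHom_eq_coe, RingHom.map_det, map_sub, map_mul, map_one, evalM_zero,
    evalM_zero]
  rfl

lemma star_dotProduct_smul_one_map_mulVec (c : ℝ) (x : Fin n → ℂ) :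
    star x ⬝ᵥ (c • (1 : Matrix (Fin n) (Fin n) ℝ)).map Complex.ofReal *ᵥ x =
      c * (star x ⬝ᵥ x) := by
  have hmap : (c • (1 : Matrix (Fin n) (Fin n) ℝ)).map Complex.ofReal = (c : ℂ) • 1 := by
    ext i j
    by_cases h : i = j <;> simp [h]
  rw [hmap, smul_mulVec, one_mulVec, dotProduct_smul, smul_eq_mul]

lemma re_le_mul_of_loewnerLE_smul_one (hA : LoewnerLE A (γ • 1)) (x : Fin n → ℂ) :
    (star x ⬝ᵥ A.map Complex.ofReal *ᵥ x).re ≤ γ * (star x ⬝ᵥ x).re := by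
  have h := (posSemidef_map_ofReal hA).re_dotProduct_nonneg x
  rw [Matrix.map_sub _ Complex.ofReal_sub, sub_mulVec, dotProduct_sub,
    star_dotProduct_smul_one_map_mulVec] at h
  simpa using h

lemma re_lt_mul_of_loewnerLT_smul_one (hA : LoewnerLT A (γ • 1)) {x : Fin n → ℂ} (hx : x ≠ 0) :
    (star x ⬝ᵥ A.map Complex.ofReal *ᵥ x).re < γ * (star x ⬝ᵥ x).re := by
  have h := (posDef_map_ofReal hA).re_dotProduct_pos hx
  rw [Matrix.map_sub _ Complex.ofReal_sub, sub_mulVec, dotProduct_sub,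
    star_dotProduct_smul_one_map_mulVec] at h
  simpa using h

lemma IsNI.loewnerLE_evalInf_evalR_zero (hNI : IsNI G) (hG : MemRHinf G) :
    LoewnerLE (evalInf G) (evalR G 0) := by
  refine PosSemidef.of_dotProduct_mulVec_nonneg
    ((hNI.isHermitian_evalR_zero hG).sub (hNI.isHermitian_evalInf hG)) fun v => ?_
  have form_ofReal (A : Matrix (Fin n) (Fin n) ℝ) :
      (star (Complex.ofReal ∘ v) ⬝ᵥ A.map Complex.ofReal *ᵥ (Complex.ofReal ∘ v)).re =
        star v ⬝ᵥ A *ᵥ v := by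
    simp [dotProduct, mulVec]
  have h := hNI.pick_inequality hG (s := 1) (by simp) 0 (Complex.ofReal ∘ v)
  rw [zero_add, form_ofReal, form_ofReal] at h
  rw [sub_mulVec, dotProduct_sub]
  simpa using h

lemma IsNI.re_conj_mul_le (hNI : IsNI G) (hG : MemRHinf G) {s : ℂ} (hs : 0 < s.re)
    (y : Fin n → ℂ) : (star s * (star y ⬝ᵥ evalM G s *ᵥ y)).re ≤
      s.re * (star y ⬝ᵥ (evalR G 0).map Complex.ofReal *ᵥ y).re := by
  have h := hNI.pick_inequality hG hs y (-y)
  simp only [add_neg_cancel, star_zero, zero_dotProduct, star_neg, neg_dotProduct, mulVec_neg,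
    dotProduct_neg, neg_neg, Complex.zero_re, Complex.neg_re, Complex.mul_re] at h
  simp only [Complex.mul_re, Complex.star_def, Complex.conj_re, Complex.conj_im]
  linarith

lemma det_one_sub_mul_ne_zero_of_loewner (hγ : 0 < γ) (hA : LoewnerLE A (γ • 1))
    (hB : B.PosSemidef) (hBγ : LoewnerLT B (γ⁻¹ • 1)) : (1 - A * B).det ≠ 0 := by
  rw [Ne, det_one_sub_mul_eq_zero_iff]
  rintro ⟨x, hx, hAB⟩
  obtain ⟨y, hy⟩ : ∃ y, B *ᵥ x = y := ⟨_, rfl⟩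
  rw [hy] at hAB
  have hy0 : y ≠ 0 := by
    rintro rfl
    exact hx (by rw [← hAB, mulVec_zero])
  have hAy : y ⬝ᵥ x ≤ γ * (y ⬝ᵥ y) := by
    simpa [sub_mulVec, smul_mulVec, hAB] using hA.dotProduct_mulVec_nonneg y
  have hBy : y ⬝ᵥ B *ᵥ y < γ⁻¹ * (y ⬝ᵥ y) := by
    simpa [sub_mulVec, smul_mulVec] using hBγ.dotProduct_mulVec_pos hy0
  have hBx : x ⬝ᵥ B *ᵥ y = y ⬝ᵥ y := by
    have hsymm : Bᵀ = B := hB.isHermitian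
    rw [dotProduct_mulVec, ← mulVec_transpose, hsymm, hy]
  have hform : 0 ≤ y ⬝ᵥ x - 2 * γ * (y ⬝ᵥ y) + γ * (γ * (y ⬝ᵥ B *ᵥ y)) := by
    have h := hB.dotProduct_mulVec_nonneg (x - γ • y)
    simp only [star_trivial, mulVec_sub, mulVec_smul, hy, sub_dotProduct, dotProduct_sub,
      smul_dotProduct, dotProduct_smul, smul_eq_mul, hBx, dotProduct_comm x y] at h
    linarith
  have hlt : γ * (γ * (y ⬝ᵥ B *ᵥ y)) < γ * (y ⬝ᵥ y) :=
    mul_lt_mul_of_pos_left ((lt_inv_mul_iff₀ hγ).1 hBy) hγ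
  linarith

lemma det_one_sub_evalM_jw_ne_zero (hP : IsSNI P) (hNI : IsNI C) (hC : MemRHinf C) {ω : ℝ}
    (hω : ω ≠ 0) : (1 - evalM P (jw ω) * evalM C (jw ω)).det ≠ 0 := by
  rw [Ne, det_one_sub_mul_eq_zero_iff]
  rintro ⟨x, hx, hPC⟩
  obtain ⟨y, hy⟩ : ∃ y, evalM C (jw ω) *ᵥ x = y := ⟨_, rfl⟩
  rw [hy] at hPC
  have hy0 : y ≠ 0 := by
    rintro rfl
    exact hx (by rw [← hPC, mulVec_zero])
  have hCx := hNI.mul_im_nonpos hC ω x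
  have hPy := hP.mul_im_neg hω hy0
  rw [hy] at hCx
  rw [hPC, star_dotProduct, Complex.star_def, Complex.conj_im] at hPy
  linarith

lemma det_one_sub_evalM_ne_zero_of_re_pos (hγ : 0 < γ) (hP : IsSNI P)
    (hPγ : LoewnerLE (evalR P 0) (γ • 1)) (hNI : IsNI C) (hC : MemRHinf C)
    (hCinf : (evalInf C).PosSemidef) (hCγ : LoewnerLT (evalR C 0) (γ⁻¹ • 1)) {s : ℂ}
    (hs : 0 < s.re) : (1 - evalM P s * evalM C s).det ≠ 0 := by
  rw [Ne, det_one_sub_mul_eq_zero_iff]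
  rintro ⟨x, hx, hPC⟩
  obtain ⟨y, hy⟩ : ∃ y, evalM C s *ᵥ x = y := ⟨_, rfl⟩
  rw [hy] at hPC
  have hy0 : y ≠ 0 := by
    rintro rfl
    exact hx (by rw [← hPC, mulVec_zero])
  set q := star x ⬝ᵥ y
  set N := (star y ⬝ᵥ y).re
  set c₀ := (star y ⬝ᵥ (evalR C 0).map Complex.ofReal *ᵥ y).re
  have hupper : (s * q).re ≤ s.re * (γ * N) := by
    have h := hP.isNI.re_conj_mul_le hP.1 hs y
    rw [hPC, star_dotProduct, ← star_mul', Complex.star_def, Complex.conj_re] at h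
    exact h.trans (mul_le_mul_of_nonneg_left (re_le_mul_of_loewnerLE_smul_one hPγ y) hs.le)
  have hlower : 0 ≤ (s * q).re - 2 * s.re * (γ * N) + s.re * (γ * (γ * c₀)) := by
    have hpick := hNI.pick_inequality hC hs x (-(γ : ℂ) • y)
    have hpos := mul_nonneg hs.le
      ((posSemidef_map_ofReal hCinf).re_dotProduct_nonneg (x + -(γ : ℂ) • y))
    have h := hpos.trans hpick
    simp only [hy, star_smul, smul_dotProduct, mulVec_smul, dotProduct_smul, smul_eq_mul,
      Complex.star_def, Complex.conj_ofReal, ← Complex.ofReal_neg, Complex.re_ofReal_mul] at h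
    linarith
  have hc₀ : γ * (γ * c₀) < γ * N := mul_lt_mul_of_pos_left
    ((lt_inv_mul_iff₀ hγ).1 (re_lt_mul_of_loewnerLT_smul_one hCγ hy0)) hγ
  nlinarith

theorem feedbackStable_of_isSNI_of_isNI (hγ : 0 < γ) (hP : IsSNI P)
    (hPγ : LoewnerLE (evalR P 0) (γ • 1)) (hNI : IsNI C) (hC : MemRHinf C)
    (hCinf : (evalInf C).PosSemidef) (hCγ : LoewnerLT (evalR C 0) (γ⁻¹ • 1)) :
    FeedbackStable P C := by
  have hPle := hP.isNI.loewnerLE_evalInf_evalR_zero hP.1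
  have hCle := hNI.loewnerLE_evalInf_evalR_zero hC
  refine (feedbackStable_iff_det_ne_zero hP.1 hC).2 ⟨fun s hs => ?_, ?_⟩
  · rcases hs.eq_or_lt with hre | hre
    · obtain ⟨ω, rfl⟩ : ∃ ω, jw ω = s := ⟨s.im, by apply Complex.ext <;> simp [jw, ← hre]⟩
      rcases eq_or_ne ω 0 with rfl | hω
      · rw [show jw 0 = 0 by simp [jw], det_one_sub_evalM_zero, Complex.ofReal_ne_zero]
        exact det_one_sub_mul_ne_zero_of_loewner hγ hPγ (by simpa using hCle.add hCinf) hCγ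
      · exact det_one_sub_evalM_jw_ne_zero hP hNI hC hω
    · exact det_one_sub_evalM_ne_zero_of_re_pos hγ hP hPγ hNI hC hCinf hCγ hre
  · refine det_one_sub_mul_ne_zero_of_loewner hγ ?_ hCinf ?_
    · simpa [LoewnerLE] using hPγ.add hPle
    · simpa [LoewnerLT] using hCγ.add_posSemidef hCle

end Sufficiency

section Plants

lemma exists_posDef_mulVec_eq {𝕜 ι : Type*} [RCLike 𝕜] [Fintype ι] {y v : ι → 𝕜}
    (hyv : 0 < star y ⬝ᵥ v) : ∃ Q : Matrix ι ι 𝕜, Q.PosDef ∧ Q *ᵥ y = v := by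
  classical
  set E : Matrix ι ι 𝕜 := (star y ⬝ᵥ y) • 1 - vecMulVec y (star y) with hE
  have mulVec_E (x : ι → 𝕜) : E *ᵥ x = (star y ⬝ᵥ y) • x - (star y ⬝ᵥ x) • y := by
    rw [hE, sub_mulVec, smul_mulVec, one_mulVec, vecMulVec_mulVec, op_smul_eq_smul]
  have hvy : star v ⬝ᵥ y = star y ⬝ᵥ v := by
    rw [star_dotProduct, (IsSelfAdjoint.of_nonneg hyv.le).star_eq]
  set Q := (star y ⬝ᵥ v)⁻¹ • vecMulVec v (star v) + Eᴴ * E with hQ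
  have mulVec_Q (x : ι → 𝕜) :
      Q *ᵥ x = ((star y ⬝ᵥ v)⁻¹ * (star v ⬝ᵥ x)) • v + Eᴴ *ᵥ E *ᵥ x := by
    rw [hQ, add_mulVec, smul_mulVec, vecMulVec_mulVec, op_smul_eq_smul, smul_smul, mulVec_mulVec]
  have hQy : Q *ᵥ y = v := by
    rw [mulVec_Q, mulVec_E, sub_self, mulVec_zero, hvy, inv_mul_cancel₀ hyv.ne', one_smul, add_zero]
  have hQ_psd : Q.PosSemidef :=
    ((posSemidef_vecMulVec_self_star v).smul (inv_nonneg.2 hyv.le)).add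
      (posSemidef_conjTranspose_mul_self E)
  refine ⟨Q, hQ_psd.posDef_iff_det_ne_zero.2 fun hdet => ?_, hQy⟩
  obtain ⟨x, hx, hQx⟩ := exists_mulVec_eq_zero_iff.2 hdet
  have hvx : star v ⬝ᵥ x = 0 := by
    rw [← hQy, star_mulVec, hQ_psd.isHermitian.eq, ← dotProduct_mulVec, hQx, dotProduct_zero]
  have hEx : E *ᵥ x = 0 := by
    rw [← conjTranspose_mul_self_mulVec_eq_zero, ← mulVec_mulVec, ← hQx, mulVec_Q, hvx, mul_zero,
      zero_smul, zero_add]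
  have hxy : (star y ⬝ᵥ y) • x = (star y ⬝ᵥ x) • y := sub_eq_zero.1 ((mulVec_E x).symm.trans hEx)
  have hyx : star y ⬝ᵥ x = 0 := by
    have h := congrArg (star v ⬝ᵥ ·) hxy
    simpa [dotProduct_smul, hvx, hvy, hyv.ne'] using h
  have hy : y ≠ 0 := by
    rintro rfl
    simp at hyv
  rw [hyx, zero_smul, smul_eq_zero_iff_right (dotProduct_star_self_eq_zero.not.2 hy)] at hxy
  exact hx hxy

lemma posSemidef_map_re {ι : Type*} [Finite ι] {Q : Matrix ι ι ℂ} (hQ : Q.PosSemidef) :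
    (Q.map Complex.re).PosSemidef := by
  have := Fintype.ofFinite ι
  refine PosSemidef.of_dotProduct_mulVec_nonneg (hQ.isHermitian.map _ fun _ => rfl) fun v => ?_
  have h := hQ.re_dotProduct_nonneg (Complex.ofReal ∘ v)
  simpa [dotProduct, mulVec] using h

open scoped MatrixOrder Matrix.Norms.L2Operator in
lemma exists_loewnerLE_map_re_smul_one {Q : Matrix (Fin n) (Fin n) ℂ} (hQ : Q.IsHermitian) :
    ∃ K : ℝ, 0 ≤ K ∧ LoewnerLE (Q.map Complex.re) (K • 1) := by
  refine ⟨‖Q‖, norm_nonneg Q, ?_⟩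
  have hle : (algebraMap ℝ _ ‖Q‖ - Q).PosSemidef :=
    Matrix.le_iff.1 (IsSelfAdjoint.le_algebraMap_norm_self hQ.isSelfAdjoint)
  have hmap : (algebraMap ℝ _ ‖Q‖ - Q).map Complex.re = ‖Q‖ • 1 - Q.map Complex.re := by
    rw [Algebra.algebraMap_eq_smul_one]
    ext i j
    by_cases h : i = j <;> simp [h]
  rw [LoewnerLE, ← hmap]
  exact posSemidef_map_re hle

lemma LoewnerLE.smul_le_smul_one {A : Matrix (Fin n) (Fin n) ℝ} {K c γ : ℝ}
    (hA : LoewnerLE A (K • 1)) (hc : 0 ≤ c) (hcK : c * K ≤ γ) : LoewnerLE (c • A) (γ • 1) := by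
  have h := (hA.smul hc).add (PosSemidef.one.smul (sub_nonneg.2 hcK))
  rwa [smul_sub, smul_smul, sub_smul, add_comm, sub_add_sub_cancel] at h

lemma posDef_niKer_smul {a : ℂ} (ha : a.im < 0) {N : Matrix (Fin n) (Fin n) ℂ} (hN : N.PosDef) :
    (niKer (a • N)).PosDef := by
  refine posDef_niKer_iff.2 fun x hx => ?_
  have him := hN.isHermitian.im_star_dotProduct_mulVec_self x
  have hre := hN.re_dotProduct_pos hx
  rw [smul_mulVec, dotProduct_smul, smul_eq_mul, Complex.mul_im]
  simp only [RCLike.re_to_complex, RCLike.im_to_complex] at him hre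
  rw [him, mul_zero, zero_add]
  exact mul_neg_of_neg_of_pos ha hre

/-- The transfer matrix `d⁻¹ N` with polynomial numerator matrix `N` and scalar denominator `d`. -/
def polyFrac (N : Matrix (Fin n) (Fin n) ℝ[X]) (d : ℝ[X]) : Matrix (Fin n) (Fin n) (RatFunc ℝ) :=
  N.map fun p => toRatFunc p / toRatFunc d

variable {N : Matrix (Fin n) (Fin n) ℝ[X]} {d : ℝ[X]}

lemma memRHinf_polyFrac (hN : ∀ i j, (N i j).degree ≤ d.degree)
    (hd : ∀ s : ℂ, 0 ≤ s.re → aeval s d ≠ 0) : MemRHinf (polyFrac N d) :=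
  memRHinf_iff_forall_mem.2 fun i j => ⟨N i j, d, hN i j, hd, rfl⟩

lemma evalM_polyFrac (N : Matrix (Fin n) (Fin n) ℝ[X]) {s : ℂ} (hd : aeval s d ≠ 0) :
    evalM (polyFrac N d) s = (aeval s d)⁻¹ • N.map (aeval s) := by
  ext i j
  exact (evalC_div (N i j) hd).trans (div_eq_inv_mul _ _)

lemma evalR_zero_polyFrac (N : Matrix (Fin n) (Fin n) ℝ[X]) (hd : d.eval 0 ≠ 0) :
    evalR (polyFrac N d) 0 = (d.eval 0)⁻¹ • N.map (eval 0) := by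
  have aeval_zero (p : ℝ[X]) : aeval (0 : ℂ) p = p.eval 0 := by
    rw [← Complex.ofReal_zero]
    exact aeval_algebraMap_apply_eq_algebraMap_eval 0 p
  have h := evalM_polyFrac N (s := 0) (d := d) (by simpa [aeval_zero] using hd)
  ext i j
  have hij := congrFun₂ ((evalM_zero _).symm.trans h) i j
  simp only [map_apply, Matrix.smul_apply, aeval_zero, smul_eq_mul] at hij ⊢
  exact_mod_cast hij

lemma evalInf_polyFrac_of_degree_lt (hN : ∀ i j, (N i j).degree < d.degree)
    (hd : ∀ s : ℂ, 0 ≤ s.re → aeval s d ≠ 0) : evalInf (polyFrac N d) = 0 := by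
  ext i j
  have hmem := memRHinf_iff_forall_mem.1 (memRHinf_polyFrac (fun i j => (hN i j).le) hd) i j
  refine eq_atInfinity_of_tendsto hmem (Tendsto.congr' ?_
    ((Complex.continuous_ofReal.tendsto _).comp (div_tendsto_atTop_zero_of_degree_lt _ _ (hN i j))))
  filter_upwards [eventually_ge_atTop 0] with x hx
  refine Eq.trans ?_ (evalC_div (N i j) (hd x (by simpa using hx))).symm
  have aeval_ofReal (p : ℝ[X]) : aeval (x : ℂ) p = p.eval x :=
    aeval_algebraMap_apply_eq_algebraMap_eval x p
  rw [aeval_ofReal, aeval_ofReal, Function.comp_apply, Complex.ofReal_div]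

lemma isSNI_polyFrac (hN : ∀ i j, (N i j).degree ≤ d.degree)
    (hd : ∀ s : ℂ, 0 ≤ s.re → aeval s d ≠ 0)
    (hSNI : ∀ ω, 0 < ω → (niKer ((aeval (jw ω) d)⁻¹ • N.map (aeval (jw ω)))).PosDef) :
    IsSNI (polyFrac N d) := by
  refine ⟨memRHinf_polyFrac hN hd, fun ω hω => ?_⟩
  rw [evalM_polyFrac N (hd _ (jw_re ω).ge)]
  exact hSNI ω hω

lemma inv_im_neg {z : ℂ} (hz : 0 < z.im) : z⁻¹.im < 0 := by
  rw [Complex.inv_im]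
  exact div_neg_of_neg_of_pos (neg_neg_of_pos hz)
    (Complex.normSq_pos.2 fun h => by simp [h] at hz)

end Plants

section FirstOrderPlants

variable {A : Matrix (Fin n) (Fin n) ℝ}

lemma aeval_X_add_one_ne_zero {s : ℂ} (hs : 0 ≤ s.re) : aeval s (X + 1 : ℝ[X]) ≠ 0 := fun h => by
  have hre := congrArg Complex.re h
  simp at hre
  linarith

/-- The first-order lag `(s + 1)⁻¹ A`. -/
def lag (A : Matrix (Fin n) (Fin n) ℝ) : Matrix (Fin n) (Fin n) (RatFunc ℝ) :=
  polyFrac (A.map C) (X + 1)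

lemma degree_C_lt_degree_X_add_one (a : ℝ) : (C a).degree < (X + 1 : ℝ[X]).degree := by
  rw [← C_1, degree_X_add_C]
  exact degree_C_lt

lemma isSNI_lag (hA : A.PosDef) : IsSNI (lag A) := by
  refine isSNI_polyFrac (fun i j => (degree_C_lt_degree_X_add_one _).le)
    (fun _ hs => aeval_X_add_one_ne_zero hs) fun ω hω => ?_
  have hmap : (A.map C).map (aeval (jw ω)) = A.map Complex.ofReal := by
    ext i j
    simp
  rw [hmap]
  refine posDef_niKer_smul (inv_im_neg ?_) (posDef_map_ofReal hA)
  simpa [jw] using hω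

lemma evalR_zero_lag (A : Matrix (Fin n) (Fin n) ℝ) : evalR (lag A) 0 = A := by
  rw [lag, evalR_zero_polyFrac _ (by simp)]
  ext i j
  simp

lemma evalInf_lag (A : Matrix (Fin n) (Fin n) ℝ) : evalInf (lag A) = 0 :=
  evalInf_polyFrac_of_degree_lt (fun _ _ => degree_C_lt_degree_X_add_one _)
    fun _ hs => aeval_X_add_one_ne_zero hs

lemma IsSNI.sub_map_C {P : Matrix (Fin n) (Fin n) (RatFunc ℝ)} (hP : IsSNI P)
    (hA : A.IsHermitian) : IsSNI (P - A.map RatFunc.C) := by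
  refine ⟨hP.1.sub_map_C A, fun ω hω => ?_⟩
  rw [evalM_sub_map_C hP.1 A (jw_re ω).ge, niKer_sub_map_ofReal _ hA]
  exact hP.2 ω hω

end FirstOrderPlants

section InterpolatingPlants

variable {w τ : ℝ} {b : ℂ} {Q : Matrix (Fin n) (Fin n) ℂ}

lemma quadratic_ne_zero_of_re_nonneg {a b c : ℝ} (ha : 0 < a) (hb : 0 < b) (hc : 0 < c) {s : ℂ}
    (hs : 0 ≤ s.re) : a * s ^ 2 + b * s + c ≠ 0 := by
  intro h
  have hre : a * (s.re ^ 2 - s.im ^ 2) + b * s.re + c = 0 := by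
    simpa [sq] using congrArg Complex.re h
  have him : s.im * (2 * a * s.re + b) = 0 := by
    have h := congrArg Complex.im h
    simp [sq] at h
    linarith
  have hs_im : s.im = 0 := (mul_eq_zero.1 him).resolve_right (by positivity)
  rw [hs_im] at hre
  have : 0 < a * (s.re ^ 2 - 0 ^ 2) + b * s.re + c := by
    rw [zero_pow two_ne_zero, sub_zero]
    positivity
  exact this.ne' hre

lemma posDef_map_star {ι : Type*} [Finite ι] {Q : Matrix ι ι ℂ} (hQ : Q.PosDef) :
    (Q.map star).PosDef := by
  have := Fintype.ofFinite ι
  have h : Q.map star = Qᵀ := Matrix.ext fun i j => hQ.isHermitian.apply j i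
  exact h ▸ hQ.transpose

/-- The numerator of `interpolant`. On the imaginary axis it is a combination of `Q` and its
entrywise conjugate with weights `(w + ω)² / 2` and `(w - ω)² / 2`, so that it equals `2w² Q` at
`jw`. -/
def interpolantNum (w : ℝ) (Q : Matrix (Fin n) (Fin n) ℂ) : Matrix (Fin n) (Fin n) ℝ[X] :=
  Q.map fun z => (C (w ^ 2) - X ^ 2) * C z.re + C (2 * w) * X * C z.im

/-- The denominator of `interpolant`, which takes the value `2w² b` at `jw`. -/
def interpolantDenom (w τ : ℝ) (b : ℂ) : ℝ[X] :=
  C τ * X ^ 2 + C (2 * w * b.im) * X + C (w ^ 2 * (τ + 2 * b.re))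

/-- A second-order plant with the value `b⁻¹ Q` at `jw`, whose gain at `0` is made small by a large
`τ`. -/
def interpolant (w τ : ℝ) (b : ℂ) (Q : Matrix (Fin n) (Fin n) ℂ) :
    Matrix (Fin n) (Fin n) (RatFunc ℝ) :=
  polyFrac (interpolantNum w Q) (interpolantDenom w τ b)

lemma interpolantNum_map_aeval_jw (w ω : ℝ) (Q : Matrix (Fin n) (Fin n) ℂ) :
    (interpolantNum w Q).map (aeval (jw ω)) =
      ((w + ω) ^ 2 / 2 : ℝ) • Q + ((w - ω) ^ 2 / 2 : ℝ) • Q.map star := by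
  ext i j
  apply Complex.ext <;> simp [interpolantNum, jw, sq] <;> ring

lemma aeval_interpolantDenom_ne_zero (hw : 0 < w) (hτ : 0 < τ) (hb : 0 < b.im)
    (hτb : 0 < τ + 2 * b.re) {s : ℂ} (hs : 0 ≤ s.re) : aeval s (interpolantDenom w τ b) ≠ 0 := by
  have h := quadratic_ne_zero_of_re_nonneg hτ (by positivity : 0 < 2 * w * b.im)
    (by positivity : 0 < w ^ 2 * (τ + 2 * b.re)) hs
  simpa [interpolantDenom] using h

lemma isSNI_interpolant (hw : 0 < w) (hτ : 0 < τ) (hb : 0 < b.im) (hτb : 0 < τ + 2 * b.re)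
    (hQ : Q.PosDef) : IsSNI (interpolant w τ b Q) := by
  refine isSNI_polyFrac (fun i j => ?_)
    (fun _ hs => aeval_interpolantDenom_ne_zero hw hτ hb hτb hs) fun ω hω => ?_
  · rw [interpolantDenom, degree_quadratic hτ.ne', interpolantNum, map_apply]
    compute_degree
  · refine posDef_niKer_smul (inv_im_neg ?_) ?_
    · simpa [interpolantDenom, jw, sq] using by positivity
    · rw [interpolantNum_map_aeval_jw]
      exact (hQ.smul (by positivity)).add_posSemidef
        ((posDef_map_star hQ).posSemidef.smul (by positivity))

lemma evalM_interpolant_jw (hw : 0 < w) (hb : 0 < b.im) (τ : ℝ) (Q : Matrix (Fin n) (Fin n) ℂ) :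
    evalM (interpolant w τ b Q) (jw w) = b⁻¹ • Q := by
  have hb0 : b ≠ 0 := fun h => by simp [h] at hb
  have hw0 : (w : ℂ) ≠ 0 := Complex.ofReal_ne_zero.2 hw.ne'
  have hd : aeval (jw w) (interpolantDenom w τ b) = ((2 * w ^ 2 : ℝ) : ℂ) * b := by
    apply Complex.ext <;> simp [interpolantDenom, jw, sq] <;> ring
  rw [interpolant, evalM_polyFrac _ (by rw [hd]; simp [hw0, hb0]), interpolantNum_map_aeval_jw, hd]
  rw [sub_self, zero_pow two_ne_zero, zero_div, zero_smul, add_zero, ← two_mul, ← Complex.coe_smul,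
    smul_smul]
  congr 1
  push_cast
  field_simp

lemma evalR_zero_interpolant (hw : 0 < w) (hτb : 0 < τ + 2 * b.re)
    (Q : Matrix (Fin n) (Fin n) ℂ) :
    evalR (interpolant w τ b Q) 0 = (τ + 2 * b.re)⁻¹ • Q.map Complex.re := by
  have hd : (interpolantDenom w τ b).eval 0 = w ^ 2 * (τ + 2 * b.re) := by
    simp [interpolantDenom]
  rw [interpolant, evalR_zero_polyFrac _ (by rw [hd]; positivity), hd]
  ext i j
  have hw0 := hw.ne'
  simp [interpolantNum]
  field_simp

lemma exists_isSNI_evalM_jw_eq {γ : ℝ} (hγ : 0 < γ) (hw : 0 < w) (hb : 0 < b.im) (hQ : Q.PosDef) :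
    ∃ P, IsSNI P ∧ LoewnerLE 0 (evalR P 0) ∧ LoewnerLE (evalR P 0) (γ • 1) ∧
      evalM P (jw w) = b⁻¹ • Q := by
  obtain ⟨K, hK, hQK⟩ := exists_loewnerLE_map_re_smul_one hQ.isHermitian
  obtain ⟨τ, hτ, hτb, hKτ⟩ : ∃ τ, 0 < τ ∧ 0 < τ + 2 * b.re ∧ K / γ ≤ τ + 2 * b.re :=
    ⟨K / γ + 2 * |b.re| + 1, by positivity, by
      have := neg_abs_le b.re
      have : 0 ≤ K / γ := by positivity
      linarith, by linarith [neg_abs_le b.re]⟩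
  have hinv : 0 ≤ (τ + 2 * b.re)⁻¹ := (inv_pos.2 hτb).le
  refine ⟨interpolant w τ b Q, isSNI_interpolant hw hτ hb hτb hQ, ?_, ?_,
    evalM_interpolant_jw hw hb τ Q⟩ <;> rw [evalR_zero_interpolant hw hτb]
  · rw [LoewnerLE, sub_zero]
    exact (posSemidef_map_re hQ.posSemidef).smul hinv
  · refine hQK.smul_le_smul_one hinv ?_
    rw [inv_mul_le_iff₀ hτb]
    exact (div_le_iff₀ hγ).1 hKτ

end InterpolatingPlants

section Necessity

variable {C : Matrix (Fin n) (Fin n) (RatFunc ℝ)} {γ : ℝ}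

/-- Condition (ii) of the theorem: `[P, C]` is stable for every SNI plant `P` with
`0 ≤ P(0) ≤ γI`. -/
def StabilizesSNI (C : Matrix (Fin n) (Fin n) (RatFunc ℝ)) (γ : ℝ) : Prop :=
  ∀ P : Matrix (Fin n) (Fin n) (RatFunc ℝ), IsSNI P → LoewnerLE 0 (evalR P 0) →
    LoewnerLE (evalR P 0) (γ • 1) → FeedbackStable P C

theorem StabilizesSNI.isNI (hstab : StabilizesSNI C γ) (hC : MemRHinf C) (hγ : 0 < γ) :
    IsNI C := by
  refine (isNI_iff_of_memRHinf hC).2 fun w hw => posSemidef_niKer_iff.2 fun x => ?_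
  by_contra! him
  set y := evalM C (jw w) *ᵥ x with hy
  set z := star x ⬝ᵥ y with hz
  have hz0 : z ≠ 0 := fun h => by simp [h] at him
  have hx : x ≠ 0 := by
    rintro rfl
    simp [hz] at hz0
  have hyx : 0 < star y ⬝ᵥ (z • x) := by
    rw [dotProduct_smul, star_dotProduct, ← hz, smul_eq_mul, mul_comm]
    exact star_mul_self_pos (IsRegular.of_ne_zero hz0)
  obtain ⟨Q, hQ, hQy⟩ := exists_posDef_mulVec_eq hyx
  obtain ⟨P, hP, hP0, hPγ, hPw⟩ := exists_isSNI_evalM_jw_eq hγ hw him hQ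
  refine ((feedbackStable_iff_det_ne_zero hP.1 hC).1 (hstab P hP hP0 hPγ)).1 (jw w) (jw_re w).ge
    (det_one_sub_mul_eq_zero_iff.2 ⟨x, hx, ?_⟩)
  rw [← hy, hPw, smul_mulVec, hQy, smul_smul, inv_mul_cancel₀ hz0, one_smul]

theorem StabilizesSNI.posSemidef_evalInf (hstab : StabilizesSNI C γ) (hC : MemRHinf C)
    (hγ : 0 < γ) : (evalInf C).PosSemidef := by
  refine PosSemidef.of_dotProduct_mulVec_nonneg
    ((hstab.isNI hC hγ).isHermitian_evalInf hC) fun x => ?_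
  by_contra! hneg
  have hx : x ≠ 0 := by
    rintro rfl
    simp at hneg
  have hyx : 0 < star (evalInf C *ᵥ x) ⬝ᵥ (-x) := by
    simpa [dotProduct_comm] using hneg
  obtain ⟨Q, hQ, hQy⟩ := exists_posDef_mulVec_eq hyx
  have hP : IsSNI (lag Q - Q.map RatFunc.C) := (isSNI_lag hQ).sub_map_C hQ.isHermitian
  have hP0 : evalR (lag Q - Q.map RatFunc.C) 0 = 0 := by
    rw [evalR_zero_sub_map_C (isSNI_lag hQ).1, evalR_zero_lag, sub_self]
  have hstable := hstab _ hP (by simp [hP0, LoewnerLE, PosSemidef.zero])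
    (by simpa [hP0, LoewnerLE] using PosSemidef.one.smul hγ.le)
  refine ((feedbackStable_iff_det_ne_zero hP.1 hC).1 hstable).2
    (det_one_sub_mul_eq_zero_iff.2 ⟨x, hx, ?_⟩)
  rw [evalInf_sub_map_C (isSNI_lag hQ).1, evalInf_lag, zero_sub, neg_mulVec, hQy, neg_neg]

theorem StabilizesSNI.loewnerLT_evalR_zero (hstab : StabilizesSNI C γ) (hC : MemRHinf C)
    (hγ : 0 < γ) : LoewnerLT (evalR C 0) (γ⁻¹ • 1) := by
  have hherm : (γ⁻¹ • 1 - evalR C 0).IsHermitian :=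
    (isHermitian_one.smul (.all _)).sub ((hstab.isNI hC hγ).isHermitian_evalR_zero hC)
  rw [LoewnerLT, hherm.posDef_iff_eigenvalues_pos]
  intro i
  by_contra! hle
  set l := hherm.eigenvalues i
  set x : Fin n → ℝ := ⇑(hherm.eigenvectorBasis i)
  have hx : x ≠ 0 := fun h =>
    hherm.eigenvectorBasis.orthonormal.ne_zero i (PiLp.ext (congrFun h))
  have hCx : evalR C 0 *ᵥ x = (γ⁻¹ - l) • x := by
    have h : γ⁻¹ • x - evalR C 0 *ᵥ x = l • x := by
      simpa [sub_mulVec, smul_mulVec] using hherm.mulVec_eigenvectorBasis i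
    rw [sub_smul, ← h, sub_sub_cancel]
  have hm : 0 < γ⁻¹ - l := by linarith [inv_pos.2 hγ]
  have hP : IsSNI (lag ((γ⁻¹ - l)⁻¹ • (1 : Matrix (Fin n) (Fin n) ℝ))) :=
    isSNI_lag (PosDef.one.smul (inv_pos.2 hm))
  have hstable : FeedbackStable (lag ((γ⁻¹ - l)⁻¹ • 1)) C := by
    refine hstab _ hP ?_ ?_ <;> rw [evalR_zero_lag]
    · simpa [LoewnerLE] using PosSemidef.one.smul (inv_pos.2 hm).le
    · rw [LoewnerLE, ← sub_smul]
      exact PosSemidef.one.smul (sub_nonneg.2 (inv_le_of_inv_le₀ hγ (by linarith)))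
  have hdet := ((feedbackStable_iff_det_ne_zero hP.1 hC).1 hstable).1 0 le_rfl
  rw [det_one_sub_evalM_zero, Complex.ofReal_ne_zero, evalR_zero_lag] at hdet
  refine hdet (det_one_sub_mul_eq_zero_iff.2 ⟨x, hx, ?_⟩)
  rw [hCx, smul_mulVec, one_mulVec, smul_smul, inv_mul_cancel₀ hm.ne', one_smul]

end Necessity

/-- converse theorem for stable SNI uncertainty with bounded
static gain (no restriction on the plant instantaneous gain). -/
theorem converse_stable_SNI_instantaneous {n : ℕ} (C : Matrix (Fin n) (Fin n) (RatFunc ℝ)) (hC : MemRHinf C)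
    (γ : ℝ) (hγ : 0 < γ) :
    ((∀ P : Matrix (Fin n) (Fin n) (RatFunc ℝ), IsSNI P → LoewnerLE (evalR P 0) (γ • 1) → FeedbackStable P C) ↔
     (∀ P : Matrix (Fin n) (Fin n) (RatFunc ℝ), IsSNI P → LoewnerLE 0 (evalR P 0) → LoewnerLE (evalR P 0) (γ • 1) →
        FeedbackStable P C)) ∧
    ((∀ P : Matrix (Fin n) (Fin n) (RatFunc ℝ), IsSNI P → LoewnerLE (evalR P 0) (γ • 1) → FeedbackStable P C) ↔
     (IsNI C ∧ (evalInf C).PosSemidef ∧ LoewnerLT (evalR C 0) (γ⁻¹ • 1))) := by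
  have sufficiency (h : IsNI C ∧ (evalInf C).PosSemidef ∧ LoewnerLT (evalR C 0) (γ⁻¹ • 1))
      (P : Matrix (Fin n) (Fin n) (RatFunc ℝ)) (hP : IsSNI P)
      (hPγ : LoewnerLE (evalR P 0) (γ • 1)) : FeedbackStable P C :=
    feedbackStable_of_isSNI_of_isNI hγ hP hPγ h.1 hC h.2.1 h.2.2
  have necessity (h : StabilizesSNI C γ) :
      IsNI C ∧ (evalInf C).PosSemidef ∧ LoewnerLT (evalR C 0) (γ⁻¹ • 1) :=
    ⟨h.isNI hC hγ, h.posSemidef_evalInf hC hγ, h.loewnerLT_evalR_zero hC hγ⟩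
  exact ⟨⟨fun h P hP _ hPγ => h P hP hPγ, fun h => sufficiency (necessity h)⟩,
    ⟨fun h => necessity fun P hP _ hPγ => h P hP hPγ, sufficiency⟩⟩

end NIControl
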